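/- Suppose n ≥ 100k² and F, G ⊆ binom([n],k) are cross-intersecting families. Then |I(F, G)| ≤ |I(A1, A2)|. -/

import Mathlib

open Finset

def ground (n : ℕ) : Finset ℕ := Finset.Icc 1 n

def ksets (n k : ℕ) : Finset (Finset ℕ) := (ground n).powersetCard k

def starF (n k : ℕ) (T : Finset ℕ) : Finset (Finset ℕ) :=
  (ksets n k).filter fun S => T ⊆ S

def meet (A B : Finset (Finset ℕ)) : Finset (Finset ℕ) :=
  (A ×ˢ B).image fun p => p.1 ∩ p.2

def dInt (A B : Finset (Finset ℕ)) : Finset (Finset ℕ) :=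
  ((A ×ˢ B).filter fun p => p.1 ≠ p.2).image fun p => p.1 ∩ p.2

def crossInt (A B : Finset (Finset ℕ)) : Prop :=
  ∀ F ∈ A, ∀ G ∈ B, (F ∩ G).Nonempty

open Classical in
noncomputable def nu (A : Finset (Finset ℕ)) : ℕ :=
  (A.powerset.filter fun M : Finset (Finset ℕ) =>
    (↑M : Set (Finset ℕ)).PairwiseDisjoint id).sup Finset.card

def transv (n k : ℕ) (H : Finset (Finset ℕ)) : Finset (Finset ℕ) :=
  (ground n).powerset.filter fun T => T.card ≤ k ∧ ∀ h ∈ H, (T ∩ h).Nonempty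

def basis (n k : ℕ) (H : Finset (Finset ℕ)) : Finset (Finset ℕ) :=
  (transv n k H).filter fun b => ∀ b' ∈ transv n k H, b' ⊆ b → b' = b

def tIntersecting (t : ℕ) (A : Finset (Finset ℕ)) : Prop :=
  ∀ F ∈ A, ∀ F' ∈ A, t ≤ (F ∩ F').card

def ttransv (n k t : ℕ) (H : Finset (Finset ℕ)) : Finset (Finset ℕ) :=
  (ground n).powerset.filter fun T => T.card ≤ k ∧ ∀ h ∈ H, t ≤ (T ∩ h).card

def tbasis (n k t : ℕ) (H : Finset (Finset ℕ)) : Finset (Finset ℕ) :=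
  (ttransv n k t H).filter fun b => ∀ b' ∈ ttransv n k t H, b' ⊆ b → b' = b

def crossSperner (A B : Finset (Finset ℕ)) : Prop :=
  ∀ a ∈ A, ∀ b ∈ B, ¬ a ⊆ b ∧ ¬ b ⊆ a

def A1 (n k : ℕ) : Finset (Finset ℕ) :=
  starF n k {1, 2} ∪ starF n k {3, 4} ∪ starF n k {1, 4, 5} ∪ starF n k {2, 3, 6}

def A2 (n k : ℕ) : Finset (Finset ℕ) :=
  starF n k {1, 3} ∪ starF n k {2, 4} ∪ starF n k {1, 4, 6} ∪ starF n k {2, 3, 5}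

def Ankt (n k t : ℕ) : Finset (Finset ℕ) :=
  (ksets n k).filter fun A => t + 1 ≤ (A ∩ ground (t + 2)).card

/-- The subsets `D` of `X` with `|D| + s ≤ k`. -/
def lowSets (X : Finset ℕ) (k s : ℕ) : Finset (Finset ℕ) :=
  X.powerset.filter fun D => D.card + s ≤ k

/-- The subsets `D` of `X` with `|D| + s ≤ k` that meet `S`. -/
def hitSets (X : Finset ℕ) (k s : ℕ) (S : Finset ℕ) : Finset (Finset ℕ) :=
  (lowSets X k s).filter fun D => (D ∩ S).Nonempty

/-- `T` is a transversal of the family `Q`. -/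
def Hits (T : Finset ℕ) (Q : Finset (Finset ℕ)) : Prop :=
  ∀ q ∈ Q, (T ∩ q).Nonempty

/-- The transversals of `Q` of size at most `s` have no common element. -/
def NoCommon (s : ℕ) (Q : Finset (Finset ℕ)) : Prop :=
  ∀ v, ∃ T, Hits T Q ∧ T.card ≤ s ∧ v ∉ T

theorem mem_lowSets {X D : Finset ℕ} {k s : ℕ} :
    D ∈ lowSets X k s ↔ D ⊆ X ∧ D.card + s ≤ k := by
  simp [lowSets]

theorem mem_hitSets {X D S : Finset ℕ} {k s : ℕ} :
    D ∈ hitSets X k s S ↔ (D ⊆ X ∧ D.card + s ≤ k) ∧ (D ∩ S).Nonempty := by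
  simp [hitSets, mem_lowSets]

theorem mem_meet {A B : Finset (Finset ℕ)} {D : Finset ℕ} :
    D ∈ meet A B ↔ ∃ a ∈ A, ∃ b ∈ B, a ∩ b = D := by
  simp only [meet, mem_image, mem_product, Prod.exists]
  constructor
  · rintro ⟨a, b, ⟨ha, hb⟩, h⟩
    exact ⟨a, ha, b, hb, h⟩
  · rintro ⟨a, ha, b, hb, h⟩
    exact ⟨a, b, ⟨ha, hb⟩, h⟩

theorem meet_comm (A B : Finset (Finset ℕ)) : meet A B = meet B A := by
  ext D
  simp only [mem_meet]
  constructor <;> rintro ⟨a, ha, b, hb, h⟩ <;> exact ⟨b, hb, a, ha, by rw [inter_comm, h]⟩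

theorem crossInt_symm {A B : Finset (Finset ℕ)} (h : crossInt A B) : crossInt B A :=
  fun b hb a ha => by rw [inter_comm]; exact h a ha b hb

theorem card_lowSets (X : Finset ℕ) (k s : ℕ) :
    (lowSets X k s).card = ∑ j ∈ range (k + 1 - s), X.card.choose j := by
  have h : lowSets X k s = (range (k + 1 - s)).biUnion fun j => X.powersetCard j := by
    ext D
    simp only [mem_lowSets, mem_biUnion, mem_range, mem_powersetCard]
    constructor
    · rintro ⟨h1, h2⟩
      exact ⟨D.card, by omega, h1, rfl⟩
    · rintro ⟨j, h1, h2, rfl⟩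
      exact ⟨h2, by omega⟩
  rw [h, card_biUnion]
  · simp
  · intro i _ j _ hij
    exact X.pairwise_disjoint_powersetCard hij

theorem card_lowSets_succ_mul_le {X : Finset ℕ} {k s : ℕ} (hX : 100 * k ^ 2 ≤ X.card)
    (hs : 1 ≤ s) :
    (lowSets X k (s + 1)).card * (100 * k) ≤ (lowSets X k s).card := by
  rw [card_lowSets, card_lowSets, sum_mul]
  rcases Nat.lt_or_ge k s with h | h
  · simp [show k + 1 - (s + 1) = 0 by omega]
  rw [show k + 1 - (s + 1) = k - s by omega, show k + 1 - s = (k - s) + 1 by omega,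
    sum_range_succ']
  refine le_add_right (sum_le_sum fun j hj => ?_)
  rw [mem_range] at hj
  have e := Nat.choose_succ_right_eq X.card j
  have h1 : (100 * k) * (j + 1) ≤ X.card - j := by
    have : (100 * k) * (j + 1) + j ≤ 100 * k ^ 2 := by
      have hjk : j + 2 ≤ k := by omega
      nlinarith
    omega
  refine Nat.le_of_mul_le_mul_right (c := j + 1) ?_ (Nat.succ_pos j)
  rw [e, mul_assoc]
  exact Nat.mul_le_mul_left _ h1

theorem card_lowSets_add_mul_pow_le {X : Finset ℕ} {k s : ℕ} (hX : 100 * k ^ 2 ≤ X.card)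
    (hs : 1 ≤ s) (i : ℕ) :
    (lowSets X k (s + i)).card * (100 * k) ^ i ≤ (lowSets X k s).card := by
  induction i with
  | zero => simp
  | succ i ih =>
    refine le_trans ?_ ih
    rw [pow_succ', ← mul_assoc]
    exact Nat.mul_le_mul_right _ (card_lowSets_succ_mul_le (s := s + i) hX (by omega))

/-- If every `D ∈ 𝒟` has, for some `c ∈ C`, one of at most `a` traces on `c` and at most
`k - s` elements off `c`, then `𝒟` is small. -/
theorem card_le_of_traces {X : Finset ℕ} {k s a : ℕ} {𝒟 C : Finset (Finset ℕ)}
    (𝒜 : Finset ℕ → Finset (Finset ℕ)) (ha : ∀ c ∈ C, (𝒜 c).card ≤ a)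
    (h : ∀ D ∈ 𝒟, D ⊆ X ∧ ∃ c ∈ C, D ∩ c ∈ 𝒜 c ∧ (D \ c).card + s ≤ k) :
    𝒟.card ≤ C.card * (a * (lowSets X k s).card) := by
  have hsub : 𝒟 ⊆ C.biUnion fun c => (𝒜 c ×ˢ lowSets X k s).image fun p => p.1 ∪ p.2 := by
    intro D hD
    obtain ⟨hX, c, hc, h1, h2⟩ := h D hD
    simp only [mem_biUnion, mem_image, mem_product, Prod.exists]
    exact ⟨c, hc, D ∩ c, D \ c, ⟨h1, mem_lowSets.2 ⟨sdiff_subset.trans hX, h2⟩⟩,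
      by rw [union_comm, sdiff_union_inter]⟩
  refine (card_le_card hsub).trans (card_biUnion_le_card_mul _ _ _ fun c hc => ?_)
  refine card_image_le.trans ?_
  rw [card_product]
  exact Nat.mul_le_mul_right _ (ha c hc)

theorem card_le_of_mem {X : Finset ℕ} {k s x : ℕ} {𝒟 : Finset (Finset ℕ)}
    (h : ∀ D ∈ 𝒟, D ⊆ X ∧ x ∈ D ∧ D.card + s ≤ k) :
    𝒟.card ≤ (lowSets X k (s + 1)).card := by
  have := card_le_of_traces (X := X) (k := k) (s := s + 1) (a := 1) (𝒟 := 𝒟) (C := {{x}})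
    (fun c => {c}) (by simp) fun D hD => by
      obtain ⟨h1, h2, h3⟩ := h D hD
      refine ⟨h1, {x}, mem_singleton_self _, by simpa using h2, ?_⟩
      rw [card_sdiff_of_subset (by simpa using h2), card_singleton]
      have := card_pos.2 ⟨x, h2⟩
      omega
  simpa using this

theorem card_le_of_subset_cover {X : Finset ℕ} {k s : ℕ} {𝒟 C : Finset (Finset ℕ)}
    (hC : ∀ c ∈ C, c.card = s)
    (h : ∀ D ∈ 𝒟, ∃ c ∈ C, ∃ U, U ⊆ X ∧ U.card ≤ k ∧ c ⊆ U ∧ D ⊆ U) :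
    𝒟.card ≤ C.card * (2 ^ s * (lowSets X k s).card) := by
  refine card_le_of_traces (fun c => c.powerset) (fun c hc => by rw [card_powerset, hC c hc])
    fun D hD => ?_
  obtain ⟨c, hc, U, hUX, hU, hcU, hDU⟩ := h D hD
  refine ⟨hDU.trans hUX, c, hc, mem_powerset.2 inter_subset_right, ?_⟩
  have h1 := card_le_card (sdiff_subset_sdiff hDU (Subset.refl c))
  have h2 := card_le_card hcU
  rw [card_sdiff_of_subset hcU] at h1
  have := hC c hc
  omega

theorem card_le_of_near_cover {X : Finset ℕ} {k s : ℕ} {𝒟 C : Finset (Finset ℕ)}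
    (hC : ∀ c ∈ C, c.card = s)
    (h : ∀ D ∈ 𝒟, ∃ c ∈ C, ∃ U, U ⊆ X ∧ U.card ≤ k ∧ c ⊆ U ∧ D ⊆ U ∧ U.card ≤ D.card + 1) :
    𝒟.card ≤ C.card * ((s + 1) * (lowSets X k s).card) := by
  refine card_le_of_traces (fun c => insert c (c.image c.erase)) (fun c hc => ?_)
    fun D hD => ?_
  · refine (card_insert_le _ _).trans ?_
    have := card_image_le (s := c) (f := c.erase)
    rw [hC c hc] at this
    omega
  obtain ⟨c, hc, U, hUX, hU, hcU, hDU, hUD⟩ := h D hD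
  refine ⟨hDU.trans hUX, c, hc, ?_, ?_⟩
  · by_cases hcD : c ⊆ D
    · simp [inter_eq_right.2 hcD]
    · obtain ⟨y, hyc, hyD⟩ := not_subset.1 hcD
      refine mem_insert_of_mem (mem_image.2 ⟨y, hyc, ?_⟩)
      have hone : (U \ D).card ≤ 1 := by
        rw [card_sdiff_of_subset hDU]; omega
      ext z
      simp only [mem_erase, mem_inter]
      constructor
      · rintro ⟨hzy, hzc⟩
        refine ⟨?_, hzc⟩
        by_contra hzD
        exact hzy (card_le_one.1 hone z (mem_sdiff.2 ⟨hcU hzc, hzD⟩) y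
          (mem_sdiff.2 ⟨hcU hyc, hyD⟩))
      · rintro ⟨hzD, hzc⟩
        exact ⟨fun e => hyD (e ▸ hzD), hzc⟩
  · have h1 := card_le_card (sdiff_subset_sdiff hDU (Subset.refl c))
    have h2 := card_le_card hcU
    rw [card_sdiff_of_subset hcU] at h1
    have := hC c hc
    omega

theorem card_le_of_superset_cover {X : Finset ℕ} {k s : ℕ} {𝒟 C : Finset (Finset ℕ)}
    (hC : ∀ c ∈ C, c.card = s)
    (h : ∀ D ∈ 𝒟, D ⊆ X ∧ D.card + 1 ≤ k ∧ ∃ c ∈ C, c ⊆ D) :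
    𝒟.card ≤ C.card * (lowSets X k (s + 1)).card := by
  have := card_le_of_traces (X := X) (k := k) (s := s + 1) (a := 1) (𝒟 := 𝒟) (C := C)
    (fun c => {c}) (by simp) fun D hD => by
      obtain ⟨h1, h2, c, hc, h3⟩ := h D hD
      refine ⟨h1, c, hc, by simp [inter_eq_right.2 h3], ?_⟩
      rw [card_sdiff_of_subset h3, hC c hc]
      have := card_le_card h3
      rw [hC c hc] at this
      omega
  simpa using this

/-- Branching: a cover by `i`-sets extends to a cover by `(i + j)`-sets as long as no covered set
contains a transversal of size less than `i + j`. -/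
theorem exists_cover_add {k i : ℕ} {P Q C : Finset (Finset ℕ)} (hQ : ∀ q ∈ Q, q.card ≤ k)
    (hPQ : ∀ p ∈ P, Hits p Q) (hCi : ∀ c ∈ C, c.card = i)
    (hC : ∀ p ∈ P, ∃ c ∈ C, c ⊆ p) (j : ℕ)
    (hno : ∀ p ∈ P, ∀ T ⊆ p, Hits T Q → i + j ≤ T.card) :
    ∃ C' : Finset (Finset ℕ), C'.card ≤ C.card * k ^ j ∧ (∀ c ∈ C', c.card = i + j) ∧
      ∀ p ∈ P, ∃ c ∈ C', c ⊆ p := by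
  induction j with
  | zero => exact ⟨C, by simp, hCi, hC⟩
  | succ j ih =>
    obtain ⟨C', h1, h2, h3⟩ := ih fun p hp T hT hTQ => by have := hno p hp T hT hTQ; omega
    have key : ∀ c : Finset ℕ, ∃ q : Finset ℕ, q.card ≤ k ∧
        (¬ Hits c Q → q ∈ Q ∧ c ∩ q = ∅) := by
      intro c
      by_cases hc : Hits c Q
      · exact ⟨∅, by simp, fun h => absurd hc h⟩
      · simp only [Hits, not_forall, not_nonempty_iff_eq_empty] at hc
        obtain ⟨q, hq, hcq⟩ := hc
        exact ⟨q, hQ q hq, fun _ => ⟨hq, hcq⟩⟩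
    choose f hfk hf using key
    refine ⟨(C'.filter fun c => ¬ ∃ v ∈ f c, v ∈ c).biUnion
      fun c => (f c).image fun v => insert v c, ?_, ?_, ?_⟩
    · refine (card_biUnion_le_card_mul _ _ k fun c _ => card_image_le.trans (hfk c)).trans ?_
      rw [pow_succ, ← mul_assoc]
      exact Nat.mul_le_mul_right _ ((card_filter_le _ _).trans h1)
    · intro c hc
      simp only [mem_biUnion, mem_filter, mem_image] at hc
      obtain ⟨c', ⟨hc', hv'⟩, v, hv, rfl⟩ := hc
      rw [card_insert_of_notMem fun h => hv' ⟨v, hv, h⟩, h2 c' hc']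
      ring
    · intro p hp
      obtain ⟨c, hc, hcp⟩ := h3 p hp
      have hn : ¬ Hits c Q := fun h => by
        have := hno p hp c hcp h
        rw [h2 c hc] at this
        omega
      obtain ⟨hq, hdis⟩ := hf c hn
      obtain ⟨v, hv⟩ := hPQ p hp _ hq
      rw [mem_inter] at hv
      refine ⟨insert v c, mem_biUnion.2 ⟨c, mem_filter.2 ⟨hc, ?_⟩,
        mem_image.2 ⟨v, hv.2, rfl⟩⟩, insert_subset hv.1 hcp⟩
      rintro ⟨w, hw, hwc⟩
      have : w ∈ c ∩ f c := mem_inter.2 ⟨hwc, hw⟩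
      simp [hdis] at this

theorem exists_cover_of_hits {k r : ℕ} {P Q : Finset (Finset ℕ)} {T : Finset ℕ}
    (hQ : ∀ q ∈ Q, q.card ≤ k) (hPQ : ∀ p ∈ P, Hits p Q) (hT : Hits T P) (hr : 1 ≤ r)
    (hno : ∀ p ∈ P, ∀ T ⊆ p, Hits T Q → r ≤ T.card) :
    ∃ C : Finset (Finset ℕ), C.card ≤ T.card * k ^ (r - 1) ∧ (∀ c ∈ C, c.card = r) ∧
      ∀ p ∈ P, ∃ c ∈ C, c ⊆ p := by
  obtain ⟨j, rfl⟩ := Nat.exists_eq_add_of_le hr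
  obtain ⟨C, h1, h2, h3⟩ := exists_cover_add (i := 1) (C := T.image fun v => {v}) hQ hPQ
    (by simp) (fun p hp => by
      obtain ⟨v, hv⟩ := hT p hp
      rw [mem_inter] at hv
      exact ⟨{v}, mem_image.2 ⟨v, hv.1, rfl⟩, by simpa using hv.2⟩) j hno
  refine ⟨C, h1.trans ?_, h2, h3⟩
  rw [Nat.add_sub_cancel_left]
  exact Nat.mul_le_mul_right _ card_image_le

theorem exists_cover_of_noCommon {k r s : ℕ} {P Q : Finset (Finset ℕ)}
    (hQ : ∀ q ∈ Q, q.card ≤ k) (hPQ : ∀ p ∈ P, Hits p Q) (hs : NoCommon s P) (hr : 2 ≤ r)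
    (hno : ∀ p ∈ P, ∀ T ⊆ p, Hits T Q → r ≤ T.card) :
    ∃ C : Finset (Finset ℕ), C.card ≤ s ^ 2 * k ^ (r - 2) ∧ (∀ c ∈ C, c.card = r) ∧
      ∀ p ∈ P, ∃ c ∈ C, c ⊆ p := by
  obtain ⟨j, rfl⟩ := Nat.exists_eq_add_of_le hr
  choose T hT hTs hTv using hs
  obtain ⟨C, h1, h2, h3⟩ := exists_cover_add (i := 2)
    (C := (T 0).biUnion fun v => (T v).image fun w => {v, w}) hQ hPQ
    (by
      intro c hc
      simp only [mem_biUnion, mem_image] at hc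
      obtain ⟨v, _, w, hw, rfl⟩ := hc
      exact card_pair fun e => hTv v (e ▸ hw)) (fun p hp => by
      obtain ⟨v, hv⟩ := hT 0 p hp
      obtain ⟨w, hw⟩ := hT v p hp
      rw [mem_inter] at hv hw
      exact ⟨{v, w}, mem_biUnion.2 ⟨v, hv.1, mem_image.2 ⟨w, hw.1, rfl⟩⟩,
        by simp [insert_subset_iff, hv.2, hw.2]⟩) j hno
  refine ⟨C, h1.trans ?_, h2, h3⟩
  rw [Nat.add_sub_cancel_left]
  refine Nat.mul_le_mul_right _ ?_
  refine (card_biUnion_le_card_mul _ _ s fun v _ => card_image_le.trans (hTs v)).trans ?_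
  rw [sq]
  exact Nat.mul_le_mul_right _ (hTs 0)

theorem exists_min_transversal {Q : Finset (Finset ℕ)} (h : ∃ T, Hits T Q) :
    ∃ T, Hits T Q ∧ ∀ T', Hits T' Q → T.card ≤ T'.card := by
  classical
  have h' : ∃ t, ∃ T, Hits T Q ∧ T.card = t := h.elim fun T hT => ⟨_, T, hT, rfl⟩
  obtain ⟨T, hT, hc⟩ := Nat.find_spec h'
  exact ⟨T, hT, fun T' hT' => hc ▸ Nat.find_min' h' ⟨T', hT', rfl⟩⟩

theorem exists_min_noCommon {Q : Finset (Finset ℕ)} (h : ∃ s, NoCommon s Q) :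
    ∃ s, NoCommon s Q ∧ ∃ x, ∀ T, Hits T Q → T.card < s → x ∈ T := by
  classical
  refine ⟨Nat.find h, Nat.find_spec h, ?_⟩
  rcases Nat.eq_zero_or_pos (Nat.find h) with h0 | h0
  · exact ⟨0, fun T _ hT => by omega⟩
  · have := Nat.find_min h (Nat.sub_lt h0 one_pos)
    simp only [NoCommon, not_forall, not_exists, not_and, not_not] at this
    obtain ⟨x, hx⟩ := this
    exact ⟨x, fun T hT hc => hx T hT (Nat.le_sub_one_of_lt hc)⟩

theorem two_le_card_of_hits {Q : Finset (Finset ℕ)} {T : Finset ℕ} (hT : Hits T Q)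
    (hQ : ∀ z, ∃ q ∈ Q, z ∉ q) : 2 ≤ T.card := by
  by_contra! h
  obtain ⟨z, hz⟩ : ∃ z, T ⊆ {z} := by
    rcases T.eq_empty_or_nonempty with rfl | ⟨z, hz⟩
    · exact ⟨0, by simp⟩
    · exact ⟨z, fun w hw => mem_singleton.2 (card_le_one.1 (by omega) w hw z hz)⟩
  obtain ⟨q, hq, hzq⟩ := hQ z
  obtain ⟨w, hw⟩ := hT q hq
  rw [mem_inter] at hw
  have := mem_singleton.1 (hz hw.1)
  exact hzq (this ▸ hw.2)

theorem exists_noCommon {P Q : Finset (Finset ℕ)} (hPQ : crossInt P Q)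
    (hP : ∀ z, ∃ p ∈ P, z ∉ p) : ∃ s, NoCommon s Q := by
  refine ⟨P.sup card, fun v => ?_⟩
  obtain ⟨p, hp, hv⟩ := hP v
  exact ⟨p, hPQ p hp, le_sup (f := card) hp, hv⟩

theorem mul_card_lowSets_le {X : Finset ℕ} {k s i a b R c : ℕ} (hX : 100 * k ^ 2 ≤ X.card)
    (hs : 1 ≤ s) (hc : c ≤ a * k ^ i * (lowSets X k (s + i)).card)
    (hab : R * a ≤ b * 100 ^ i) :
    R * c ≤ b * (lowSets X k s).card := by
  have h := card_lowSets_add_mul_pow_le hX hs i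
  calc R * c ≤ R * (a * k ^ i * (lowSets X k (s + i)).card) := Nat.mul_le_mul_left _ hc
    _ = (R * a) * (k ^ i * (lowSets X k (s + i)).card) := by ring
    _ ≤ (b * 100 ^ i) * (k ^ i * (lowSets X k (s + i)).card) := Nat.mul_le_mul_right _ hab
    _ = b * ((lowSets X k (s + i)).card * (100 * k) ^ i) := by rw [mul_pow]; ring
    _ ≤ b * (lowSets X k s).card := Nat.mul_le_mul_left _ h

theorem succ_mul_two_pow_le (i : ℕ) (hi : 1 ≤ i) : 10 * ((i + 1) * 2 ^ (i + 1)) ≤ 100 ^ i := by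
  induction i, hi using Nat.le_induction with
  | base => norm_num
  | succ i hi ih =>
    have : 0 < 2 ^ i := by positivity
    rw [pow_succ 100, pow_succ 2 (i + 1)]
    nlinarith [pow_succ 2 i, mul_pos this (show 0 < i by omega)]

theorem succ_le_hundred_pow (i : ℕ) (hi : 1 ≤ i) : 100 * (i + 1) ≤ 2 * 100 ^ i := by
  induction i, hi using Nat.le_induction with
  | base => norm_num
  | succ i hi ih =>
    rw [pow_succ 100]
    omega

theorem sq_mul_two_pow_le (i : ℕ) (hi : 1 ≤ i) :
    100 * ((i + 2) ^ 2 * 2 ^ (i + 2)) ≤ 72 * 100 ^ i := by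
  induction i, hi using Nat.le_induction with
  | base => norm_num
  | succ i hi ih =>
    have h1 : (i + 1 + 2) ^ 2 ≤ 2 * (i + 2) ^ 2 := by nlinarith
    calc 100 * ((i + 1 + 2) ^ 2 * 2 ^ (i + 1 + 2))
        ≤ 100 * ((2 * (i + 2) ^ 2) * 2 ^ (i + 1 + 2)) := by gcongr
      _ = 4 * (100 * ((i + 2) ^ 2 * 2 ^ (i + 2))) := by ring
      _ ≤ 4 * (72 * 100 ^ i) := by gcongr
      _ ≤ 72 * 100 ^ (i + 1) := by rw [pow_succ]; omega

theorem cubic_le_hundred_pow (i : ℕ) (hi : 1 ≤ i) :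
    100 * ((i + 1) ^ 2 * (i + 3)) ≤ 16 * 100 ^ i := by
  induction i, hi using Nat.le_induction with
  | base => norm_num
  | succ i hi ih =>
    have h1 : (i + 1 + 1) ^ 2 ≤ 4 * (i + 1) ^ 2 := by nlinarith
    calc 100 * ((i + 1 + 1) ^ 2 * (i + 1 + 3))
        ≤ 100 * ((4 * (i + 1) ^ 2) * (2 * (i + 3))) := by gcongr; omega
      _ = 8 * (100 * ((i + 1) ^ 2 * (i + 3))) := by ring
      _ ≤ 8 * (16 * 100 ^ i) := by gcongr
      _ ≤ 16 * 100 ^ (i + 1) := by rw [pow_succ]; omega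

theorem card_meet_le_of_common {X : Finset ℕ} {m x : ℕ} {P Q : Finset (Finset ℕ)}
    {p₀ : Finset ℕ} (hX : 100 * m ^ 2 ≤ X.card) (hQ : ∀ q ∈ Q, q ⊆ X ∧ q.card ≤ m)
    (hx : ∀ q ∈ Q, x ∈ q) (hp₀ : ∀ q ∈ Q, (p₀ ∩ q).Nonempty) (hxp : x ∉ p₀)
    (hp₀m : p₀.card ≤ m) :
    10 * (meet P Q).card ≤ (lowSets X m 1).card := by
  have h := card_le_of_subset_cover (X := X) (k := m) (s := 2) (𝒟 := meet P Q)
    (C := p₀.image fun v => {x, v})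
    (by
      intro c hc
      obtain ⟨v, hv, rfl⟩ := mem_image.1 hc
      exact card_pair fun e => hxp (e ▸ hv))
    (by
      intro D hD
      obtain ⟨p, -, q, hq, rfl⟩ := mem_meet.1 hD
      obtain ⟨v, hv⟩ := hp₀ q hq
      rw [mem_inter] at hv
      exact ⟨{x, v}, mem_image.2 ⟨v, hv.1, rfl⟩, q, (hQ q hq).1, (hQ q hq).2,
        by simp [insert_subset_iff, hx q hq, hv.2], inter_subset_right⟩)
  have h' : (meet P Q).card ≤ 4 * m ^ 1 * (lowSets X m (1 + 1)).card := by
    refine h.trans ?_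
    calc _ ≤ m * (2 ^ 2 * (lowSets X m 2).card) :=
          Nat.mul_le_mul_right _ (card_image_le.trans hp₀m)
      _ = _ := by ring
  simpa using mul_card_lowSets_le (R := 10) (b := 1) hX le_rfl h' (by norm_num)

theorem card_meet_le_of_min_transversals {X : Finset ℕ} {m : ℕ} {P Q : Finset (Finset ℕ)}
    {S T : Finset ℕ} (hX : 100 * m ^ 2 ≤ X.card) (hP : ∀ p ∈ P, p ⊆ X ∧ p.card ≤ m)
    (hQ : ∀ q ∈ Q, q.card ≤ m) (hPQ : crossInt P Q) (hT : Hits T P)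
    (hS : ∀ S', Hits S' Q → S.card ≤ S'.card) (h2 : 2 ≤ S.card) (hTS : T.card ≤ S.card) :
    10 * (meet P Q).card ≤ (lowSets X m 1).card := by
  obtain ⟨C, hC1, hC2, hC3⟩ := exists_cover_of_hits (r := S.card) hQ hPQ hT (by omega)
    fun p hp T' _ hT' => hS T' hT'
  have h := card_le_of_subset_cover (X := X) (k := m) (𝒟 := meet P Q) hC2 (by
    intro D hD
    obtain ⟨p, hp, q, hq, rfl⟩ := mem_meet.1 hD
    obtain ⟨c, hc, hcp⟩ := hC3 p hp
    exact ⟨c, hc, p, (hP p hp).1, (hP p hp).2, hcp, inter_subset_left⟩)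
  obtain ⟨i, hi⟩ : ∃ i, S.card = 1 + i := ⟨S.card - 1, by omega⟩
  have h' : (meet P Q).card ≤ ((i + 1) * 2 ^ (i + 1)) * m ^ i * (lowSets X m (1 + i)).card := by
    refine h.trans ?_
    rw [hi, Nat.add_sub_cancel_left] at hC1
    calc _ ≤ ((1 + i) * m ^ i) * (2 ^ S.card * (lowSets X m S.card).card) :=
          Nat.mul_le_mul_right _ (hC1.trans (Nat.mul_le_mul_right _ (by omega)))
      _ = _ := by rw [hi]; ring
  simpa using mul_card_lowSets_le (R := 10) (b := 1) hX le_rfl h'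
    (by simpa using succ_mul_two_pow_le i (by omega))

/-- The intersections of two cross-intersecting families either share an element or are few. -/
theorem exists_common_or_card_meet_le {X : Finset ℕ} {m : ℕ} {P Q : Finset (Finset ℕ)}
    (hX : 100 * m ^ 2 ≤ X.card) (hP : ∀ p ∈ P, p ⊆ X ∧ p.card ≤ m)
    (hQ : ∀ q ∈ Q, q ⊆ X ∧ q.card ≤ m) (hPQ : crossInt P Q) :
    (∃ w, ∀ D ∈ meet P Q, w ∈ D) ∨ 10 * (meet P Q).card ≤ (lowSets X m 1).card := by
  have hQP := crossInt_symm hPQ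
  have common : ∀ {P Q : Finset (Finset ℕ)}, (∀ p ∈ P, p ⊆ X ∧ p.card ≤ m) →
      (∀ q ∈ Q, q ⊆ X ∧ q.card ≤ m) → crossInt P Q → (∃ x, ∀ q ∈ Q, x ∈ q) →
      (∃ w, ∀ D ∈ meet P Q, w ∈ D) ∨ 10 * (meet P Q).card ≤ (lowSets X m 1).card := by
    rintro P Q hP hQ hPQ ⟨x, hx⟩
    by_cases h : ∀ p ∈ P, x ∈ p
    · refine .inl ⟨x, fun D hD => ?_⟩
      obtain ⟨p, hp, q, hq, rfl⟩ := mem_meet.1 hD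
      exact mem_inter.2 ⟨h p hp, hx q hq⟩
    · push Not at h
      obtain ⟨p₀, hp₀, hxp⟩ := h
      exact .inr (card_meet_le_of_common hX hQ hx (hPQ p₀ hp₀) hxp (hP p₀ hp₀).2)
  by_cases h1 : ∃ x, ∀ q ∈ Q, x ∈ q
  · exact common hP hQ hPQ h1
  by_cases h2 : ∃ x, ∀ p ∈ P, x ∈ p
  · rw [meet_comm]
    exact common hQ hP hQP h2
  push Not at h1 h2
  obtain ⟨p, hp, -⟩ := h2 0
  obtain ⟨q, hq, -⟩ := h1 0
  obtain ⟨S, hS, hSmin⟩ := exists_min_transversal ⟨p, hPQ p hp⟩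
  obtain ⟨T, hT, hTmin⟩ := exists_min_transversal ⟨q, hQP q hq⟩
  have hS2 := two_le_card_of_hits hS h1
  have hT2 := two_le_card_of_hits hT h2
  right
  rcases le_total T.card S.card with h | h
  · exact card_meet_le_of_min_transversals hX hP (fun q hq => (hQ q hq).2) hPQ hT hSmin hS2 h
  · rw [meet_comm]
    exact card_meet_le_of_min_transversals hX hQ (fun p hp => (hP p hp).2) hQP hS hTmin hT2 h

theorem lowSets_pred {X : Finset ℕ} {k s : ℕ} (hk : 1 ≤ k) :
    lowSets X (k - 1) s = lowSets X k (s + 1) := by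
  ext D
  simp only [mem_lowSets]
  refine and_congr_right fun _ => ?_
  omega

theorem card_meet_le_of_common_left {X : Finset ℕ} {k z : ℕ} {P Q : Finset (Finset ℕ)}
    (hP : ∀ p ∈ P, p ⊆ X ∧ p.card + 1 ≤ k) (hz : ∀ p ∈ P, z ∈ p) :
    (meet P Q).card ≤ 2 * (lowSets X k 2).card := by
  rw [← card_filter_add_card_filter_not (s := meet P Q) (fun D => z ∈ D), two_mul]
  refine Nat.add_le_add (card_le_of_mem (x := z) fun D hD => ?_) (card_le_card fun D hD => ?_)
  · obtain ⟨hD, hzD⟩ := mem_filter.1 hD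
    obtain ⟨p, hp, q, hq, rfl⟩ := mem_meet.1 hD
    have := card_le_card (inter_subset_left (s₁ := p) (s₂ := q))
    have := (hP p hp).2
    exact ⟨inter_subset_left.trans (hP p hp).1, hzD, by omega⟩
  · obtain ⟨hD, hzD⟩ := mem_filter.1 hD
    obtain ⟨p, hp, q, hq, rfl⟩ := mem_meet.1 hD
    have := card_lt_card (Finset.ssubset_iff_subset_ne.2
      ⟨inter_subset_left (s₁ := p) (s₂ := q), fun e => hzD (by rw [e]; exact hz p hp)⟩)
    have := (hP p hp).2
    exact mem_lowSets.2 ⟨inter_subset_left.trans (hP p hp).1, by omega⟩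

theorem card_meet_le_of_common_right {X : Finset ℕ} {k z : ℕ} {P Q : Finset (Finset ℕ)}
    (hX : 100 * k ^ 2 ≤ X.card) (hP : ∀ p ∈ P, p ⊆ X ∧ p.card + 1 ≤ k)
    (hQ : ∀ q ∈ Q, q ⊆ X ∧ q.card ≤ k) (hPQ : crossInt P Q) (hz : ∀ q ∈ Q, z ∈ q) :
    (meet P Q).card ≤ 2 * (lowSets X k 2).card := by
  rcases Nat.eq_zero_or_pos k with rfl | hk
  · have : P = ∅ := eq_empty_of_forall_notMem fun p hp => by have := (hP p hp).2; omega
    simp [this, meet]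
  rw [← card_filter_add_card_filter_not (s := meet P Q) (fun D => z ∈ D), two_mul]
  refine Nat.add_le_add (card_le_of_mem (x := z) fun D hD => ?_) ?_
  · obtain ⟨hD, hzD⟩ := mem_filter.1 hD
    obtain ⟨p, hp, q, hq, rfl⟩ := mem_meet.1 hD
    have := card_le_card (inter_subset_left (s₁ := p) (s₂ := q))
    have := (hP p hp).2
    exact ⟨inter_subset_left.trans (hP p hp).1, hzD, by omega⟩
  set P' := P.filter fun p => z ∉ p with hP'
  set Q' := Q.image fun q => q.erase z with hQ'
  have hPm : ∀ p ∈ P', p ⊆ X ∧ p.card ≤ k - 1 := fun p hp => by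
    have := hP p (mem_filter.1 hp).1
    exact ⟨this.1, by omega⟩
  have hQm : ∀ q ∈ Q', q ⊆ X ∧ q.card ≤ k - 1 := fun q hq => by
    obtain ⟨q, hqQ, rfl⟩ := mem_image.1 hq
    have := hQ q hqQ
    rw [card_erase_of_mem (hz q hqQ)]
    exact ⟨(erase_subset _ _).trans this.1, by omega⟩
  have heq : ∀ p ∈ P', ∀ q, p ∩ q.erase z = p ∩ q := fun p hp q => by
    have := (mem_filter.1 hp).2
    ext v
    simp only [mem_inter, mem_erase]
    constructor
    · tauto
    · rintro ⟨h1, h2⟩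
      exact ⟨h1, fun e => this (e ▸ h1), h2⟩
  have hcross : crossInt P' Q' := fun p hp q hq => by
    obtain ⟨q, hqQ, rfl⟩ := mem_image.1 hq
    rw [heq p hp]
    exact hPQ p (mem_filter.1 hp).1 q hqQ
  have hsub : (meet P Q).filter (fun D => ¬ z ∈ D) ⊆ meet P' Q' := fun D hD => by
    obtain ⟨hD, hzD⟩ := mem_filter.1 hD
    obtain ⟨p, hp, q, hq, rfl⟩ := mem_meet.1 hD
    have hp' : p ∈ P' := mem_filter.2 ⟨hp, fun h => hzD (mem_inter.2 ⟨h, hz q hq⟩)⟩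
    exact mem_meet.2 ⟨p, hp', _, mem_image.2 ⟨q, hq, rfl⟩, heq p hp' q⟩
  refine (card_le_card hsub).trans ?_
  have hX' : 100 * (k - 1) ^ 2 ≤ X.card :=
    le_trans (Nat.mul_le_mul_left _ (Nat.pow_le_pow_left (Nat.sub_le k 1) 2)) hX
  rw [← lowSets_pred hk]
  rcases exists_common_or_card_meet_le hX' hPm hQm hcross with ⟨w, hw⟩ | h
  · refine card_le_of_mem (s := 0) (x := w) fun D hD => ⟨?_, hw D hD, ?_⟩
    all_goals obtain ⟨p, hp, q, hq, rfl⟩ := mem_meet.1 hD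
    · exact inter_subset_left.trans (hPm p hp).1
    · exact (card_le_card inter_subset_left).trans (hPm p hp).2
  · omega

/-- The intersections of size `k - 1` in the case where neither family is a star. -/
theorem card_top_le {X : Finset ℕ} {k : ℕ} {P Q : Finset (Finset ℕ)}
    (hX : 100 * k ^ 2 ≤ X.card) (hP : ∀ p ∈ P, p ⊆ X ∧ p.card + 1 ≤ k)
    (hQ : ∀ q ∈ Q, q ⊆ X ∧ q.card ≤ k) (hPQ : crossInt P Q)
    (hPz : ∀ z, ∃ p ∈ P, z ∉ p) (hQz : ∀ z, ∃ q ∈ Q, z ∉ q) :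
    100 * ((meet P Q).filter fun D => ¬ D.card + 2 ≤ k).card ≤ 116 * (lowSets X k 2).card := by
  have hQP := crossInt_symm hPQ
  obtain ⟨s, hs, z, hz⟩ := exists_min_noCommon (exists_noCommon hPQ hPz)
  obtain ⟨q₀, hq₀, -⟩ := hQz 0
  obtain ⟨T, hT, hTmin⟩ := exists_min_transversal ⟨q₀, hQP q₀ hq₀⟩
  have hT2 := two_le_card_of_hits hT hPz
  have hs2 : 2 ≤ s := by
    obtain ⟨S, hS, hSs, -⟩ := hs 0
    exact (two_le_card_of_hits hS hQz).trans hSs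
  set 𝒟 := (meet P Q).filter fun D => ¬ D.card + 2 ≤ k with h𝒟
  have hD : ∀ D ∈ 𝒟, D ∈ P ∧ D.card + 1 = k ∧ ∃ q ∈ Q, D ⊆ q := by
    intro D hD
    obtain ⟨hD, hk⟩ := mem_filter.1 hD
    obtain ⟨p, hp, q, hq, rfl⟩ := mem_meet.1 hD
    have h1 := (hP p hp).2
    have h2 := card_le_card (inter_subset_left (s₁ := p) (s₂ := q))
    have h3 : p ∩ q = p := eq_of_subset_of_card_le inter_subset_left (by omega)
    exact ⟨by rw [h3]; exact hp, by omega, q, hq, inter_subset_right⟩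
  have h1 : (𝒟.filter fun D => z ∈ D).card ≤ (lowSets X k 2).card :=
    card_le_of_mem (x := z) fun D hDz => by
      obtain ⟨hDD, hzD⟩ := mem_filter.1 hDz
      obtain ⟨h1, h2, -⟩ := hD D hDD
      exact ⟨(hP D h1).1, hzD, by omega⟩
  have h2 : 100 * (𝒟.filter fun D => ¬ z ∈ D).card ≤ 16 * (lowSets X k 2).card := by
    rcases le_or_gt T.card s with hle | hlt
    · obtain ⟨C, hC1, hC2, hC3⟩ := exists_cover_of_hits (r := s)
        (P := 𝒟.filter fun D => ¬ z ∈ D) (fun q hq => (hQ q hq).2)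
        (fun D hDz => hPQ D (hD D (mem_filter.1 hDz).1).1)
        (fun D hDz => hT D (hD D (mem_filter.1 hDz).1).1) (by omega)
        (fun D hDz T' hT' hTQ => by
          by_contra! hcard
          exact (mem_filter.1 hDz).2 (hT' (hz T' hTQ hcard)))
      have h := card_le_of_superset_cover (X := X) (k := k)
        (𝒟 := 𝒟.filter fun D => ¬ z ∈ D) hC2 (fun D hDz => by
          obtain ⟨h1, h2, -⟩ := hD D (mem_filter.1 hDz).1
          exact ⟨(hP D h1).1, by omega, hC3 D hDz⟩)
      obtain ⟨i, rfl⟩ : ∃ i, s = i + 1 := ⟨s - 1, by omega⟩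
      have h' : (𝒟.filter fun D => ¬ z ∈ D).card
          ≤ (i + 1) * k ^ i * (lowSets X k (2 + i)).card := by
        rw [show 2 + i = i + 1 + 1 by ring]
        exact h.trans (Nat.mul_le_mul_right _ (hC1.trans (Nat.mul_le_mul_right _ hle)))
      exact mul_card_lowSets_le hX (by norm_num) h'
        ((succ_le_hundred_pow i (by omega)).trans (Nat.mul_le_mul_right _ (by norm_num)))
    · obtain ⟨C, hC1, hC2, hC3⟩ := exists_cover_of_noCommon (r := T.card) (P := Q) (Q := P)
        (k := k) (fun p hp => by have := (hP p hp).2; omega) hQP hs hT2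
        (fun q hq T' _ hT' => hTmin T' hT')
      have h := card_le_of_near_cover (X := X) (k := k)
        (𝒟 := 𝒟.filter fun D => ¬ z ∈ D) hC2 (fun D hDz => by
          obtain ⟨h1, h2, q, hq, h3⟩ := hD D (mem_filter.1 hDz).1
          obtain ⟨c, hc, hcq⟩ := hC3 q hq
          have := (hQ q hq).2
          exact ⟨c, hc, q, (hQ q hq).1, (hQ q hq).2, hcq, h3, by omega⟩)
      obtain ⟨i, hi⟩ : ∃ i, T.card = 2 + i := ⟨T.card - 2, by omega⟩
      rw [hi] at h hC1
      rw [Nat.add_sub_cancel_left] at hC1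
      have h' : (𝒟.filter fun D => ¬ z ∈ D).card
          ≤ ((i + 1) ^ 2 * (i + 3)) * k ^ i * (lowSets X k (2 + i)).card := by
        refine h.trans ?_
        calc C.card * ((2 + i + 1) * (lowSets X k (2 + i)).card)
            ≤ ((i + 1) ^ 2 * k ^ i) * ((2 + i + 1) * (lowSets X k (2 + i)).card) := by
              refine Nat.mul_le_mul_right _ (hC1.trans (Nat.mul_le_mul_right _ ?_))
              exact Nat.pow_le_pow_left (by omega) 2
          _ = _ := by ring
      exact mul_card_lowSets_le hX (by norm_num) h' (cubic_le_hundred_pow i (by omega))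
  have := card_filter_add_card_filter_not (s := 𝒟) (fun D => z ∈ D)
  omega

theorem card_meet_le {X : Finset ℕ} {k : ℕ} {P Q : Finset (Finset ℕ)}
    (hX : 100 * k ^ 2 ≤ X.card) (hP : ∀ p ∈ P, p ⊆ X ∧ p.card + 1 ≤ k)
    (hQ : ∀ q ∈ Q, q ⊆ X ∧ q.card ≤ k) (hPQ : crossInt P Q) :
    100 * (meet P Q).card ≤ 216 * (lowSets X k 2).card := by
  by_cases hPz : ∃ z, ∀ p ∈ P, z ∈ p
  · obtain ⟨z, hz⟩ := hPz
    have := card_meet_le_of_common_left (Q := Q) hP hz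
    omega
  by_cases hQz : ∃ z, ∀ q ∈ Q, z ∈ q
  · obtain ⟨z, hz⟩ := hQz
    have := card_meet_le_of_common_right hX hP hQ hPQ hz
    omega
  push Not at hPz hQz
  have h1 := card_top_le hX hP hQ hPQ hPz hQz
  have h2 : ((meet P Q).filter fun D => D.card + 2 ≤ k).card ≤ (lowSets X k 2).card :=
    card_le_card fun D hD => by
      obtain ⟨hD, hk⟩ := mem_filter.1 hD
      obtain ⟨p, hp, q, hq, rfl⟩ := mem_meet.1 hD
      exact mem_lowSets.2 ⟨inter_subset_left.trans (hP p hp).1, hk⟩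
  have := card_filter_add_card_filter_not (s := meet P Q) (fun D => D.card + 2 ≤ k)
  omega

/-- If few intersections come from members of `U` that avoid `x`, there are few in total. -/
theorem card_meet_le_of_heavy {X : Finset ℕ} {k x : ℕ} {U V : Finset (Finset ℕ)}
    (hX : 100 * k ^ 2 ≤ X.card) (hU : ∀ u ∈ U, u ⊆ X ∧ u.card ≤ k)
    (hV : ∀ v ∈ V, v ⊆ X ∧ v.card ≤ k) (hUV : crossInt U V)
    (hx : 100 * (meet (U.filter fun u => x ∉ u) V).card ≤ 72 * (lowSets X k 2).card) :
    100 * ((meet U V).filter fun D => D.card + 1 ≤ k).card ≤ 390 * (lowSets X k 2).card := by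
  set P := (U.filter fun u => x ∈ u).image fun u => u.erase x with hPdef
  set Q := V.filter fun v => x ∉ v with hQdef
  have heq : ∀ u, ∀ v ∈ Q, u.erase x ∩ v = u ∩ v := fun u v hv => by
    have := (mem_filter.1 hv).2
    ext w
    simp only [mem_inter, mem_erase]
    constructor
    · tauto
    · rintro ⟨h1, h2⟩
      exact ⟨⟨fun e => this (e ▸ h2), h1⟩, h2⟩
  have hP : ∀ p ∈ P, p ⊆ X ∧ p.card + 1 ≤ k := fun p hp => by
    obtain ⟨u, hu, rfl⟩ := mem_image.1 hp
    obtain ⟨hu, hxu⟩ := mem_filter.1 hu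
    rw [card_erase_add_one hxu]
    exact ⟨(erase_subset _ _).trans (hU u hu).1, (hU u hu).2⟩
  have hQ : ∀ q ∈ Q, q ⊆ X ∧ q.card ≤ k := fun q hq => hV q (mem_filter.1 hq).1
  have hPQ : crossInt P Q := fun p hp q hq => by
    obtain ⟨u, hu, rfl⟩ := mem_image.1 hp
    rw [heq u q hq]
    exact hUV u (mem_filter.1 hu).1 q (mem_filter.1 hq).1
  have h1 := card_meet_le hX hP hQ hPQ
  set 𝒟 := (meet U V).filter fun D => D.card + 1 ≤ k with h𝒟
  have h2 : (𝒟.filter fun D => x ∈ D).card ≤ (lowSets X k 2).card :=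
    card_le_of_mem (x := x) fun D hD => by
      obtain ⟨hD, hxD⟩ := mem_filter.1 hD
      obtain ⟨hD, hk⟩ := mem_filter.1 hD
      obtain ⟨u, hu, v, hv, rfl⟩ := mem_meet.1 hD
      exact ⟨inter_subset_left.trans (hU u hu).1, hxD, hk⟩
  have hsub : 𝒟 ⊆ (𝒟.filter fun D => x ∈ D) ∪ meet (U.filter fun u => x ∉ u) V ∪ meet P Q := by
    intro D hD
    simp only [mem_union, mem_filter]
    obtain ⟨u, hu, v, hv, rfl⟩ := mem_meet.1 (mem_filter.1 hD).1
    by_cases hxu : x ∈ u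
    · by_cases hxv : x ∈ v
      · exact .inl (.inl ⟨hD, mem_inter.2 ⟨hxu, hxv⟩⟩)
      · have hvQ : v ∈ Q := mem_filter.2 ⟨hv, hxv⟩
        exact .inr (mem_meet.2 ⟨_, mem_image.2 ⟨u, mem_filter.2 ⟨hu, hxu⟩, rfl⟩, v, hvQ,
          heq u v hvQ⟩)
    · exact .inl (.inr (mem_meet.2 ⟨u, mem_filter.2 ⟨hu, hxu⟩, v, hv, rfl⟩))
  have h3 := card_le_card hsub
  have h4 := card_union_le ((𝒟.filter fun D => x ∈ D) ∪ meet (U.filter fun u => x ∉ u) V)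
    (meet P Q)
  have h5 := card_union_le (𝒟.filter fun D => x ∈ D) (meet (U.filter fun u => x ∉ u) V)
  omega

theorem card_hitSets_add {X S : Finset ℕ} (k s : ℕ) :
    (hitSets X k s S).card + (lowSets (X \ S) k s).card = (lowSets X k s).card := by
  rw [← card_filter_add_card_filter_not (s := lowSets X k s) fun D => (D ∩ S).Nonempty]
  congr 2
  ext D
  simp only [mem_lowSets, mem_filter, subset_sdiff, not_nonempty_iff_eq_empty,
    disjoint_iff_inter_eq_empty]
  tauto

theorem card_hitSets_congr {X X' S S' : Finset ℕ} (k s : ℕ) (hS : S ⊆ X) (hS' : S' ⊆ X')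
    (hX : X.card = X'.card) (h : S.card = S'.card) :
    (hitSets X k s S).card = (hitSets X' k s S').card := by
  have h1 := card_hitSets_add (X := X) (S := S) k s
  have h2 := card_hitSets_add (X := X') (S := S') k s
  have h3 : (lowSets (X \ S) k s).card = (lowSets (X' \ S') k s).card := by
    rw [card_lowSets, card_lowSets, card_sdiff_of_subset hS, card_sdiff_of_subset hS', hX, h]
  have h4 : (lowSets X k s).card = (lowSets X' k s).card := by
    rw [card_lowSets, card_lowSets, hX]
  omega

theorem card_hitSets_le {X : Finset ℕ} (k s : ℕ) (S : Finset ℕ) :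
    (hitSets X k s S).card ≤ S.card * (lowSets X k (s + 1)).card := by
  have hsub : hitSets X k s S ⊆ S.biUnion fun x => (lowSets X k s).filter fun D => x ∈ D := by
    intro D hD
    obtain ⟨hD, x, hx⟩ := mem_hitSets.1 hD
    rw [mem_inter] at hx
    exact mem_biUnion.2 ⟨x, hx.2, mem_filter.2 ⟨mem_lowSets.2 hD, hx.1⟩⟩
  refine (card_le_card hsub).trans (card_biUnion_le_card_mul _ _ _ fun x _ => ?_)
  refine card_le_of_mem (x := x) fun D hD => ?_
  obtain ⟨hD, hx⟩ := mem_filter.1 hD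
  rw [mem_lowSets] at hD
  exact ⟨hD.1, hx, hD.2⟩

theorem card_mul_le_card_hitSets_add {X : Finset ℕ} (k s : ℕ) (S : Finset ℕ) (hS : S ⊆ X) :
    S.card * (lowSets X k (s + 1)).card ≤
      (hitSets X k s S).card + S.card ^ 2 * (lowSets X k (s + 2)).card := by
  induction S using Finset.induction_on with
  | empty => simp
  | insert x S hxS ih =>
    have ih := ih ((subset_insert x S).trans hS)
    set N := (lowSets X k s).filter fun D => x ∈ D ∧ D ∩ S = ∅ with hN
    have h1 : (hitSets X k s S).card + N.card ≤ (hitSets X k s (insert x S)).card := by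
      rw [← card_union_of_disjoint]
      · refine card_le_card (union_subset (fun D hD => ?_) fun D hD => ?_)
        · obtain ⟨h, hne⟩ := mem_hitSets.1 hD
          exact mem_hitSets.2 ⟨h, hne.mono (inter_subset_inter_left (subset_insert x S))⟩
        · obtain ⟨h, hx, -⟩ := mem_filter.1 hD
          exact mem_hitSets.2 ⟨mem_lowSets.1 h, x, by simp [hx]⟩
      · rw [disjoint_left]
        intro D hD hD'
        obtain ⟨-, hne⟩ := mem_hitSets.1 hD
        rw [(mem_filter.1 hD').2.2] at hne
        simp at hne
    have hsub : lowSets X k (s + 1) ⊆ (N.image fun D => D.erase x) ∪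
        hitSets X k (s + 1) (insert x S) := by
      intro D hD
      have hD' := mem_lowSets.1 hD
      by_cases hne : (D ∩ insert x S).Nonempty
      · exact mem_union_right _ (mem_hitSets.2 ⟨hD', hne⟩)
      · have hdis : Disjoint D (insert x S) := by
          rwa [disjoint_iff_inter_eq_empty, ← not_nonempty_iff_eq_empty]
        rw [disjoint_insert_right] at hdis
        refine mem_union_left _ (mem_image.2 ⟨insert x D, mem_filter.2 ⟨mem_lowSets.2
          ⟨insert_subset (hS (mem_insert_self x S)) hD'.1, ?_⟩, mem_insert_self x D, ?_⟩,
          erase_insert hdis.1⟩)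
        · rw [card_insert_of_notMem hdis.1]
          omega
        · rw [insert_inter_of_notMem hxS, disjoint_iff_inter_eq_empty.1 hdis.2]
    have h2 := (card_le_card hsub).trans (card_union_le _ _)
    have h3 : (N.image fun D => D.erase x).card ≤ N.card := card_image_le
    have h4 := card_hitSets_le (X := X) k (s + 1) (insert x S)
    rw [card_insert_of_notMem hxS] at h4 ⊢
    rw [show s + 1 + 1 = s + 2 by ring] at h4
    nlinarith [Nat.zero_le (S.card * (lowSets X k (s + 2)).card)]

theorem card_meet_union_meet_le {X S : Finset ℕ} {m : ℕ} {P P' Q Q' : Finset (Finset ℕ)}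
    (hX : 100 * m ^ 2 ≤ X.card) (hP : ∀ p ∈ P, p ⊆ X ∧ p.card ≤ m)
    (hQ : ∀ q ∈ Q, q ⊆ X ∧ q.card ≤ m) (hPQ : crossInt P Q)
    (hP' : ∀ p ∈ P', p ⊆ X ∧ p.card ≤ m) (hQ' : ∀ q ∈ Q', q ⊆ X ∧ q.card ≤ m)
    (hPQ' : crossInt P' Q') (hS : S ⊆ X) (hS2 : S.card = 2) :
    (meet P Q ∪ meet P' Q').card ≤ (hitSets X m 0 S).card := by
  have hmem : ∀ {P Q : Finset (Finset ℕ)}, (∀ p ∈ P, p ⊆ X ∧ p.card ≤ m) →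
      ∀ D ∈ meet P Q, D ⊆ X ∧ D.card + 0 ≤ m := by
    intro P Q hP D hD
    obtain ⟨p, hp, q, hq, rfl⟩ := mem_meet.1 hD
    exact ⟨inter_subset_left.trans (hP p hp).1,
      (card_le_card inter_subset_left).trans (hP p hp).2⟩
  have hstar : ∀ {P Q : Finset (Finset ℕ)}, (∀ p ∈ P, p ⊆ X ∧ p.card ≤ m) →
      (∃ w, ∀ D ∈ meet P Q, w ∈ D) → (meet P Q).card ≤ (lowSets X m 1).card := by
    rintro P Q hP ⟨w, hw⟩
    exact card_le_of_mem (s := 0) (x := w) fun D hD =>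
      ⟨(hmem hP D hD).1, hw D hD, (hmem hP D hD).2⟩
  have hlow : 11 * (lowSets X m 1).card ≤ 10 * (hitSets X m 0 S).card := by
    have h1 := card_mul_le_card_hitSets_add m 0 S hS
    rw [hS2] at h1
    have h2 := card_lowSets_succ_mul_le (s := 1) hX le_rfl
    rcases Nat.eq_zero_or_pos m with rfl | hm
    · simp [card_lowSets]
    · have h3 : (lowSets X m (1 + 1)).card * 100 ≤ (lowSets X m 1).card :=
        (Nat.mul_le_mul_left _ (by omega)).trans h2
      simp only [zero_add, Nat.reduceAdd, Nat.reducePow] at h1 h3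
      omega
  have hun := card_union_le (meet P Q) (meet P' Q')
  rcases exists_common_or_card_meet_le hX hP hQ hPQ with h1 | h1 <;>
    rcases exists_common_or_card_meet_le hX hP' hQ' hPQ' with h2 | h2
  · obtain ⟨w, hw⟩ := h1
    obtain ⟨w', hw'⟩ := h2
    have hcard : (({w, w'} : Finset ℕ) ∩ X).card ≤ 2 :=
      (card_le_card inter_subset_left).trans card_le_two
    obtain ⟨S', hS1, hS3, hS4⟩ := exists_subsuperset_card_eq
      (inter_subset_right (s₁ := {w, w'}) (s₂ := X)) hcard (hS2 ▸ card_le_card hS)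
    rw [card_hitSets_congr m 0 hS hS3 rfl (hS2.trans hS4.symm)]
    refine card_le_card fun D hD => ?_
    rcases mem_union.1 hD with h | h
    · have := hmem hP D h
      exact mem_hitSets.2 ⟨this, w, mem_inter.2 ⟨hw D h,
        hS1 (mem_inter.2 ⟨by simp, this.1 (hw D h)⟩)⟩⟩
    · have := hmem hP' D h
      exact mem_hitSets.2 ⟨this, w', mem_inter.2 ⟨hw' D h,
        hS1 (mem_inter.2 ⟨by simp, this.1 (hw' D h)⟩)⟩⟩
  · have := hstar hP h1
    omega
  · have := hstar hP' h2
    omega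
  · omega

theorem exists_crossing_of_matching {E E' : Finset (Finset ℕ)} {a b c d : ℕ}
    (hE' : ∀ e ∈ E', e.card = 2) (hcross : crossInt E E') (hno : ∀ v, ∃ e ∈ E', v ∉ e)
    (hab : {a, b} ∈ E) (hcd : {c, d} ∈ E) (hac : a ≠ c) (had : a ≠ d) (hbc : b ≠ c)
    (hbd : b ≠ d) :
    ({a, c} ∈ E' ∧ {b, d} ∈ E') ∨ ({a, d} ∈ E' ∧ {b, c} ∈ E') := by
  have key : ∀ e ∈ E', e = {a, c} ∨ e = {a, d} ∨ e = {b, c} ∨ e = {b, d} := by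
    intro e he
    have pair : ∀ {x y : ℕ}, x ≠ y → x ∈ e → y ∈ e → e = {x, y} := fun hxy hx hy =>
      (eq_of_subset_of_card_le (by simp [insert_subset_iff, hx, hy])
        (by rw [hE' e he, card_pair hxy])).symm
    obtain ⟨x, hx⟩ := hcross _ hab e he
    obtain ⟨y, hy⟩ := hcross _ hcd e he
    simp only [mem_inter, mem_insert, mem_singleton] at hx hy
    obtain ⟨rfl | rfl, hx⟩ := hx <;> obtain ⟨rfl | rfl, hy⟩ := hy
    · exact .inl (pair hac hx hy)
    · exact .inr (.inl (pair had hx hy))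
    · exact .inr (.inr (.inl (pair hbc hx hy)))
    · exact .inr (.inr (.inr (pair hbd hx hy)))
  have ha : {b, c} ∈ E' ∨ {b, d} ∈ E' := by
    obtain ⟨e, he, hv⟩ := hno a
    rcases key e he with rfl | rfl | rfl | rfl <;> simp_all
  have hb : {a, c} ∈ E' ∨ {a, d} ∈ E' := by
    obtain ⟨e, he, hv⟩ := hno b
    rcases key e he with rfl | rfl | rfl | rfl <;> simp_all
  have hc : {a, d} ∈ E' ∨ {b, d} ∈ E' := by
    obtain ⟨e, he, hv⟩ := hno c
    rcases key e he with rfl | rfl | rfl | rfl <;> simp_all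
  have hd : {a, c} ∈ E' ∨ {b, c} ∈ E' := by
    obtain ⟨e, he, hv⟩ := hno d
    rcases key e he with rfl | rfl | rfl | rfl <;> simp_all
  tauto

/-- Two cross-intersecting graphs, each with no vertex common to all its edges, share a
triangle or form an alternating 4-cycle. -/
theorem triangle_or_alternating_cycle {E E' : Finset (Finset ℕ)} (hE : ∀ e ∈ E, e.card = 2)
    (hE' : ∀ e ∈ E', e.card = 2) (hcross : crossInt E E') (hno : ∀ v, ∃ e ∈ E, v ∉ e)
    (hno' : ∀ v, ∃ e ∈ E', v ∉ e) :
    (∃ a b c, a ≠ b ∧ a ≠ c ∧ b ≠ c ∧ ({a, b} ∈ E ∧ {a, c} ∈ E ∧ {b, c} ∈ E) ∧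
      {a, b} ∈ E' ∧ {a, c} ∈ E' ∧ {b, c} ∈ E') ∨
    ∃ a b c d, (a ≠ b ∧ a ≠ c ∧ a ≠ d ∧ b ≠ c ∧ b ≠ d ∧ c ≠ d) ∧
      ({a, b} ∈ E ∧ {c, d} ∈ E) ∧ {a, c} ∈ E' ∧ {b, d} ∈ E' := by
  have matching : ∀ a b c d, a ≠ b → c ≠ d → {a, b} ∈ E → {c, d} ∈ E → a ≠ c → a ≠ d → b ≠ c →
      b ≠ d → ∃ a b c d, (a ≠ b ∧ a ≠ c ∧ a ≠ d ∧ b ≠ c ∧ b ≠ d ∧ c ≠ d) ∧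
      ({a, b} ∈ E ∧ {c, d} ∈ E) ∧ {a, c} ∈ E' ∧ {b, d} ∈ E' := by
    intro a b c d hab' hcd' hab hcd hac had hbc hbd
    rcases exists_crossing_of_matching hE' hcross hno' hab hcd hac had hbc hbd with h | h
    · exact ⟨a, b, c, d, ⟨hab', hac, had, hbc, hbd, hcd'⟩, ⟨hab, hcd⟩, h⟩
    · exact ⟨a, b, d, c, ⟨hab', had, hac, hbd, hbc, hcd'.symm⟩, ⟨hab, pair_comm c d ▸ hcd⟩, h⟩
  obtain ⟨e, he, -⟩ := hno 0
  obtain ⟨a, b, hab, rfl⟩ := card_eq_two.1 (hE e he)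
  obtain ⟨f, hf, haf⟩ := hno a
  obtain ⟨g, hg, hbg⟩ := hno b
  by_cases hbf : b ∈ f
  swap
  · obtain ⟨c, d, hcd, rfl⟩ := card_eq_two.1 (hE f hf)
    simp only [mem_insert, mem_singleton, not_or] at haf hbf
    exact .inr (matching a b c d hab hcd he hf haf.1 haf.2 hbf.1 hbf.2)
  by_cases hag : a ∈ g
  swap
  · obtain ⟨c, d, hcd, rfl⟩ := card_eq_two.1 (hE g hg)
    simp only [mem_insert, mem_singleton, not_or] at hag hbg
    exact .inr (matching a b c d hab hcd he hg hag.1 hag.2 hbg.1 hbg.2)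
  have other : ∀ {x : ℕ} {h : Finset ℕ}, h ∈ E → x ∈ h → ∃ y, x ≠ y ∧ h = {x, y} := by
    intro x h hh hx
    obtain ⟨c, d, hcd, rfl⟩ := card_eq_two.1 (hE h hh)
    rcases mem_insert.1 hx with rfl | hx
    · exact ⟨d, hcd, rfl⟩
    · rw [mem_singleton] at hx
      exact ⟨c, hx ▸ hcd.symm, by rw [hx, pair_comm]⟩
  obtain ⟨c, hbc, rfl⟩ := other hf hbf
  obtain ⟨d, had, rfl⟩ := other hg hag
  simp only [mem_insert, mem_singleton, not_or] at haf hbg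
  by_cases hcd : c = d
  swap
  · exact .inr (matching b c a d hbc had hf hg hab.symm hbg.2 (Ne.symm haf.2) hcd)
  subst hcd
  left
  have key : ∀ {x y z}, {x, y} ∈ E → {x, z} ∈ E → y ≠ z → {y, z} ∈ E' := by
    intro x y z h1 h2 hyz
    obtain ⟨e, he, hxe⟩ := hno' x
    have hy : y ∈ e := by
      obtain ⟨w, hw⟩ := hcross _ h1 e he
      simp only [mem_inter, mem_insert, mem_singleton] at hw
      obtain ⟨rfl | rfl, hw⟩ := hw
      · exact absurd hw hxe
      · exact hw
    have hz : z ∈ e := by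
      obtain ⟨w, hw⟩ := hcross _ h2 e he
      simp only [mem_inter, mem_insert, mem_singleton] at hw
      obtain ⟨rfl | rfl, hw⟩ := hw
      · exact absurd hw hxe
      · exact hw
    rwa [eq_of_subset_of_card_le (s := {y, z}) (t := e) (by simp [insert_subset_iff, hy, hz])
      (by rw [hE' e he, card_pair hyz])]
  exact ⟨a, b, c, hab, had, hbc, ⟨he, hg, hf⟩,
    key (x := c) (pair_comm a c ▸ hg) (pair_comm b c ▸ hf) hab,
    key (x := b) (pair_comm a b ▸ he) hf had, key he hg hbc⟩

theorem card_meet_le_of_noCommon {X : Finset ℕ} {k s t x : ℕ} {U V : Finset (Finset ℕ)}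
    (hX : 100 * k ^ 2 ≤ X.card) (hU : ∀ u ∈ U, u ⊆ X ∧ u.card ≤ k)
    (hV : ∀ v ∈ V, v ⊆ X ∧ v.card ≤ k) (hUV : crossInt U V) (ht : NoCommon t U)
    (hx : ∀ T, Hits T V → T.card < s → x ∈ T) (hts : t ≤ s) (hs : 3 ≤ s) :
    100 * ((meet U V).filter fun D => D.card + 1 ≤ k).card ≤ 390 * (lowSets X k 2).card := by
  refine card_meet_le_of_heavy (x := x) hX hU hV hUV ?_
  obtain ⟨i, rfl⟩ := Nat.exists_eq_add_of_le' (show 2 ≤ s by omega)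
  obtain ⟨C, hC1, hC2, hC3⟩ := exists_cover_of_noCommon (r := i + 2) (s := t)
    (P := U.filter fun u => x ∉ u) (Q := V) (fun v hv => (hV v hv).2)
    (fun u hu => hUV u (mem_filter.1 hu).1)
    (fun v => by
      obtain ⟨T, h1, h2⟩ := ht v
      exact ⟨T, fun u hu => h1 u (mem_filter.1 hu).1, h2⟩)
    (by omega) fun u hu T hT hTV => by
      by_contra! h
      exact (mem_filter.1 hu).2 (hT (hx T hTV h))
  have h1 : (meet (U.filter fun u => x ∉ u) V).card ≤
      C.card * (2 ^ (i + 2) * (lowSets X k (i + 2)).card) :=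
    card_le_of_subset_cover hC2 fun D hD => by
      obtain ⟨u, hu, v, hv, rfl⟩ := mem_meet.1 hD
      obtain ⟨c, hc, hcu⟩ := hC3 u hu
      have := hU u (mem_filter.1 hu).1
      exact ⟨c, hc, u, this.1, this.2, hcu, inter_subset_left⟩
  refine mul_card_lowSets_le (s := 2) (i := i) hX (by omega) ?_ (sq_mul_two_pow_le i (by omega))
  have h2 : C.card ≤ (i + 2) ^ 2 * k ^ i :=
    hC1.trans (Nat.mul_le_mul_right _ (Nat.pow_le_pow_left hts 2))
  calc _ ≤ _ := h1
    _ ≤ ((i + 2) ^ 2 * k ^ i) * (2 ^ (i + 2) * (lowSets X k (i + 2)).card) :=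
      Nat.mul_le_mul_right _ h2
    _ = _ := by rw [add_comm 2 i]; ring

theorem card_meet_le_of_common_mem {X : Finset ℕ} {k x : ℕ} {U V : Finset (Finset ℕ)}
    (hX : 100 * k ^ 2 ≤ X.card) (hU : ∀ u ∈ U, u ⊆ X ∧ u.card ≤ k)
    (hV : ∀ v ∈ V, v ⊆ X ∧ v.card ≤ k) (hUV : crossInt U V) (hx : ∀ u ∈ U, x ∈ u) :
    100 * ((meet U V).filter fun D => D.card + 1 ≤ k).card ≤ 390 * (lowSets X k 2).card := by
  refine card_meet_le_of_heavy (x := x) hX hU hV hUV ?_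
  rw [filter_false_of_mem fun u hu h => h (hx u hu)]
  simp [meet]

theorem mul_card_lowSets_le_card_hitSets {X S : Finset ℕ} {k : ℕ} (hk : 2 ≤ k)
    (hX : 100 * k ^ 2 ≤ X.card) (hS : S ⊆ X) (hS4 : S.card = 4) :
    390 * (lowSets X k 2).card ≤ 100 * (hitSets X k 1 S).card := by
  have h1 := card_mul_le_card_hitSets_add k 1 S hS
  have h2 := card_lowSets_succ_mul_le (s := 2) hX (by omega)
  rw [hS4] at h1
  simp only [Nat.reduceAdd, Nat.reducePow] at h1 h2
  have h3 : (lowSets X k 3).card * 200 ≤ (lowSets X k 3).card * (100 * k) :=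
    Nat.mul_le_mul_left _ (by omega)
  omega

theorem card_meet_le_of_triangle {X : Finset ℕ} {k a b c : ℕ} {U V : Finset (Finset ℕ)}
    (hU : ∀ u ∈ U, u ⊆ X) (hUabc : ∀ u ∈ U, (a ∈ u ∨ b ∈ u) ∧ (a ∈ u ∨ c ∈ u) ∧ (b ∈ u ∨ c ∈ u))
    (hVabc : ∀ v ∈ V, (a ∈ v ∨ b ∈ v) ∧ (a ∈ v ∨ c ∈ v) ∧ (b ∈ v ∨ c ∈ v)) :
    ((meet U V).filter fun D => D.card + 1 ≤ k).card ≤ 3 * (lowSets X k 2).card := by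
  have hsub : ((meet U V).filter fun D => D.card + 1 ≤ k) ⊆ hitSets X k 1 {a, b, c} := by
    intro D hD
    obtain ⟨hD, hk⟩ := mem_filter.1 hD
    obtain ⟨u, hu, v, hv, rfl⟩ := mem_meet.1 hD
    have h1 := hUabc u hu
    have h2 := hVabc v hv
    refine mem_hitSets.2 ⟨⟨inter_subset_left.trans (hU u hu), hk⟩, ?_⟩
    have : (a ∈ u ∧ a ∈ v) ∨ (b ∈ u ∧ b ∈ v) ∨ (c ∈ u ∧ c ∈ v) := by tauto
    rcases this with h | h | h
    · exact ⟨a, by simp [h]⟩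
    · exact ⟨b, by simp [h]⟩
    · exact ⟨c, by simp [h]⟩
  exact (card_le_card hsub).trans ((card_hitSets_le k 1 _).trans
    (Nat.mul_le_mul_right _ card_le_three))

/-- The parts outside `S` of the members of `U` whose trace on `S` is `T`. -/
def outerParts (U : Finset (Finset ℕ)) (S T : Finset ℕ) : Finset (Finset ℕ) :=
  (U.filter fun u => u ∩ S = T).image fun u => u \ S

theorem mem_outerParts {U : Finset (Finset ℕ)} {S T p : Finset ℕ} :
    p ∈ outerParts U S T ↔ ∃ u ∈ U, u ∩ S = T ∧ u \ S = p := by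
  simp [outerParts, and_assoc]

theorem subset_and_card_le_of_mem_outerParts {X S T p : Finset ℕ} {k : ℕ}
    {U : Finset (Finset ℕ)} (hU : ∀ u ∈ U, u ⊆ X ∧ u.card ≤ k) (hp : p ∈ outerParts U S T) :
    p ⊆ X \ S ∧ p.card ≤ k - T.card := by
  obtain ⟨u, hu, rfl, rfl⟩ := mem_outerParts.1 hp
  have h1 := card_sdiff_add_card_inter u S
  have h2 := (hU u hu).2
  exact ⟨sdiff_subset_sdiff (hU u hu).1 Subset.rfl, by omega⟩

theorem crossInt_outerParts {S T T' : Finset ℕ} {U V : Finset (Finset ℕ)} (hUV : crossInt U V)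
    (hT : Disjoint T T') : crossInt (outerParts U S T) (outerParts V S T') := by
  intro p hp q hq
  obtain ⟨u, hu, rfl, rfl⟩ := mem_outerParts.1 hp
  obtain ⟨v, hv, rfl, rfl⟩ := mem_outerParts.1 hq
  obtain ⟨w, hw⟩ := hUV u hu v hv
  rw [mem_inter] at hw
  have hwS : w ∉ S := fun h =>
    disjoint_left.1 hT (mem_inter.2 ⟨hw.1, h⟩) (mem_inter.2 ⟨hw.2, h⟩)
  exact ⟨w, by simp [hw, hwS]⟩

theorem inter_eq_pair {S w : Finset ℕ} {p q r s : ℕ} (hS : S = {p, q, r, s}) (hp : p ∈ w)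
    (hq : q ∈ w) (hr : r ∉ w) (hs : s ∉ w) : w ∩ S = {p, q} := by
  subst hS
  ext y
  simp only [mem_inter, mem_insert, mem_singleton]
  constructor
  · rintro ⟨hy, rfl | rfl | rfl | rfl⟩ <;> tauto
  · rintro (rfl | rfl) <;> tauto

theorem card_meet_le_of_alternating_cycle {X S S₂ : Finset ℕ} {k a b c d : ℕ}
    {U V : Finset (Finset ℕ)} (hk : 2 ≤ k) (hX : 100 * k ^ 2 ≤ X.card)
    (hU : ∀ u ∈ U, u ⊆ X ∧ u.card ≤ k) (hV : ∀ v ∈ V, v ⊆ X ∧ v.card ≤ k)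
    (hUV : crossInt U V) (hne : a ≠ b ∧ a ≠ c ∧ a ≠ d ∧ b ≠ c ∧ b ≠ d ∧ c ≠ d)
    (hS : S = {a, b, c, d}) (hSX : S ⊆ X) (hS₂ : S₂ ⊆ X \ S) (hS₂2 : S₂.card = 2)
    (hU4 : ∀ u ∈ U, (a ∈ u ∨ c ∈ u) ∧ (b ∈ u ∨ d ∈ u))
    (hV4 : ∀ v ∈ V, (a ∈ v ∨ b ∈ v) ∧ (c ∈ v ∨ d ∈ v)) :
    ((meet U V).filter fun D => D.card + 1 ≤ k).card ≤
      (hitSets X k 1 S).card + (hitSets (X \ S) k 2 S₂).card := by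
  obtain ⟨hab, hac, had, hbc, hbd, hcd⟩ := hne
  have hS4 : S.card = 4 := by
    rw [hS]
    simp [card_insert_of_notMem, *]
  have hsub : ((meet U V).filter fun D => D.card + 1 ≤ k) ⊆ hitSets X k 1 S ∪
      (meet (outerParts U S {a, d}) (outerParts V S {b, c}) ∪
        meet (outerParts U S {b, c}) (outerParts V S {a, d})) := by
    intro D hD
    obtain ⟨hD, hDk⟩ := mem_filter.1 hD
    obtain ⟨u, hu, v, hv, rfl⟩ := mem_meet.1 hD
    have h1 := hU4 u hu
    have h2 := hV4 v hv
    by_cases hDS : (u ∩ v ∩ S).Nonempty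
    · exact mem_union_left _
        (mem_hitSets.2 ⟨⟨inter_subset_left.trans (hU u hu).1, hDk⟩, hDS⟩)
    have hmiss : ∀ w ∈ S, w ∈ u → w ∉ v := fun w hw hwu hwv =>
      hDS ⟨w, by simp [hw, hwu, hwv]⟩
    have heq : (u \ S) ∩ (v \ S) = u ∩ v := by
      ext w
      simp only [mem_inter, mem_sdiff]
      exact ⟨fun h => ⟨h.1.1, h.2.1⟩, fun h => have hw := fun hw => hmiss w hw h.1 h.2
        ⟨⟨h.1, hw⟩, h.2, hw⟩⟩
    have ha := hmiss a (by simp [hS])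
    have hb := hmiss b (by simp [hS])
    have hc := hmiss c (by simp [hS])
    have hd := hmiss d (by simp [hS])
    have hS1 : S = {a, d, b, c} := by
      ext y
      simp only [hS, mem_insert, mem_singleton]
      omega
    have hS2 : S = {b, c, a, d} := by
      ext y
      simp only [hS, mem_insert, mem_singleton]
      omega
    refine mem_union_right _ ?_
    by_cases hau : a ∈ u
    · have hav := ha hau
      have hbv := h2.1.resolve_left hav
      have hbu := fun h => hb h hbv
      have hdu := h1.2.resolve_left hbu
      have hdv := hd hdu
      have hcv := h2.2.resolve_right hdv
      have hcu := fun h => hc h hcv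
      exact mem_union_left _ (mem_meet.2
        ⟨_, mem_outerParts.2 ⟨u, hu, inter_eq_pair hS1 hau hdu hbu hcu, rfl⟩,
          _, mem_outerParts.2 ⟨v, hv, inter_eq_pair hS2 hbv hcv hav hdv, rfl⟩, heq⟩)
    · have hcu := h1.1.resolve_left hau
      have hcv := hc hcu
      have hdv := h2.2.resolve_left hcv
      have hdu := fun h => hd h hdv
      have hbu := h1.2.resolve_right hdu
      have hbv := hb hbu
      have hav := h2.1.resolve_right hbv
      exact mem_union_right _ (mem_meet.2
        ⟨_, mem_outerParts.2 ⟨u, hu, inter_eq_pair hS2 hbu hcu hau hdu, rfl⟩,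
          _, mem_outerParts.2 ⟨v, hv, inter_eq_pair hS1 hav hdv hbv hcv, rfl⟩, heq⟩)
  have hX' : 100 * (k - 2) ^ 2 ≤ (X \ S).card := by
    rw [card_sdiff_of_subset hSX, hS4]
    obtain ⟨j, rfl⟩ := Nat.exists_eq_add_of_le' hk
    rw [Nat.add_sub_cancel]
    refine Nat.le_sub_of_add_le (le_trans ?_ hX)
    nlinarith
  have hdis : Disjoint ({a, d} : Finset ℕ) {b, c} := by
    simp [hab.symm, hac.symm, hbd, hcd]
  have hpart : ∀ {W : Finset (Finset ℕ)} {p q : ℕ}, (∀ w ∈ W, w ⊆ X ∧ w.card ≤ k) → p ≠ q →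
      ∀ y ∈ outerParts W S {p, q}, y ⊆ X \ S ∧ y.card ≤ k - 2 := fun hW hpq y hy =>
    card_pair hpq ▸ subset_and_card_le_of_mem_outerParts hW hy
  have h := card_meet_union_meet_le hX' (hpart hU had) (hpart hV hbc)
    (crossInt_outerParts hUV hdis) (hpart hU hbc) (hpart hV had)
    (crossInt_outerParts hUV hdis.symm) hS₂ hS₂2
  have hlow : hitSets (X \ S) (k - 2) 0 S₂ = hitSets (X \ S) k 2 S₂ := by
    ext D
    simp only [mem_hitSets, Nat.le_sub_iff_add_le hk, add_zero]
  rw [hlow] at h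
  exact (card_le_card hsub).trans ((card_union_le _ _).trans (Nat.add_le_add_left h _))

theorem card_meet_le_of_closed {X S₄ S₂ : Finset ℕ} {k : ℕ} {U V : Finset (Finset ℕ)}
    (hk : 2 ≤ k) (hX : 100 * k ^ 2 ≤ X.card)
    (hU : ∀ u ∈ U, u ⊆ X ∧ u.card ≤ k) (hV : ∀ v ∈ V, v ⊆ X ∧ v.card ≤ k)
    (hUV : crossInt U V) (hUc : ∀ T ⊆ X, T.card ≤ k → Hits T V → T ∈ U)
    (hVc : ∀ T ⊆ X, T.card ≤ k → Hits T U → T ∈ V)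
    (hS₄ : S₄ ⊆ X) (hS₄4 : S₄.card = 4) (hS₂ : S₂ ⊆ X \ S₄) (hS₂2 : S₂.card = 2) :
    ((meet U V).filter fun D => D.card + 1 ≤ k).card ≤
      (hitSets X k 1 S₄).card + (hitSets (X \ S₄) k 2 S₂).card := by
  have hsmall := mul_card_lowSets_le_card_hitSets hk hX hS₄ hS₄4
  have hVU := crossInt_symm hUV
  have hfew : 100 * ((meet U V).filter fun D => D.card + 1 ≤ k).card ≤
      390 * (lowSets X k 2).card → ((meet U V).filter fun D => D.card + 1 ≤ k).card ≤
      (hitSets X k 1 S₄).card + (hitSets (X \ S₄) k 2 S₂).card := by omega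
  by_cases hUx : ∃ x, ∀ u ∈ U, x ∈ u
  · obtain ⟨x, hx⟩ := hUx
    exact hfew (card_meet_le_of_common_mem hX hU hV hUV hx)
  by_cases hVx : ∃ x, ∀ v ∈ V, x ∈ v
  · obtain ⟨x, hx⟩ := hVx
    exact hfew (meet_comm V U ▸ card_meet_le_of_common_mem hX hV hU hVU hx)
  push Not at hUx hVx
  obtain ⟨s, hs, x, hx⟩ := exists_min_noCommon (exists_noCommon hUV hUx)
  obtain ⟨t, ht, y, hy⟩ := exists_min_noCommon (exists_noCommon hVU hVx)
  by_cases hst : 3 ≤ s ∨ 3 ≤ t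
  · rcases le_total t s with hle | hle
    · exact hfew (card_meet_le_of_noCommon hX hU hV hUV ht hx hle (by omega))
    · exact hfew (meet_comm V U ▸
        card_meet_le_of_noCommon hX hV hU hVU hs hy hle (by omega))
  have pairs : ∀ {P Q : Finset (Finset ℕ)} {r : ℕ}, NoCommon r Q → r ≤ 2 →
      (∀ q ∈ Q, q ⊆ X ∧ q.card ≤ k) → (∀ z, ∃ q ∈ Q, z ∉ q) →
      (∀ T ⊆ X, T.card ≤ k → Hits T Q → T ∈ P) →
      ∀ v, ∃ e ∈ P.filter fun e => e.card = 2, v ∉ e := by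
    intro P Q r hr hr2 hQ hQz hP v
    obtain ⟨T, hT, hTr, hvT⟩ := hr v
    have hTX : Hits (T ∩ X) Q := fun q hq => by
      rw [inter_assoc, inter_eq_right.2 (hQ q hq).1]
      exact hT q hq
    have h1 := two_le_card_of_hits hTX hQz
    have h2 := card_le_card (inter_subset_left (s₁ := T) (s₂ := X))
    exact ⟨T ∩ X, mem_filter.2 ⟨hP _ inter_subset_right (by omega) hTX, by omega⟩,
      fun h => hvT (mem_inter.1 h).1⟩
  have hhit : ∀ {P Q : Finset (Finset ℕ)} {p q : ℕ}, crossInt P Q →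
      {p, q} ∈ Q.filter (fun e => e.card = 2) → ∀ u ∈ P, p ∈ u ∨ q ∈ u := by
    intro P Q p q hPQ he u hu
    obtain ⟨w, hw⟩ := hPQ u hu _ (mem_filter.1 he).1
    simp only [mem_inter, mem_insert, mem_singleton] at hw
    obtain ⟨hw, rfl | rfl⟩ := hw
    · exact .inl hw
    · exact .inr hw
  rcases triangle_or_alternating_cycle (E := U.filter fun e => e.card = 2)
    (E' := V.filter fun e => e.card = 2) (fun e he => (mem_filter.1 he).2)
    (fun e he => (mem_filter.1 he).2)
    (fun e he f hf => hUV e (mem_filter.1 he).1 f (mem_filter.1 hf).1)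
    (pairs hs (by omega) hV hVx hUc) (pairs ht (by omega) hU hUx hVc) with
    ⟨a, b, c, -, -, -, ⟨h1, h2, h3⟩, h4, h5, h6⟩ | ⟨a, b, c, d, hne, ⟨h1, h2⟩, h3, h4⟩
  · have := card_meet_le_of_triangle (k := k) (fun u hu => (hU u hu).1)
      (fun u hu => ⟨hhit hUV h4 u hu, hhit hUV h5 u hu, hhit hUV h6 u hu⟩)
      (fun v hv => ⟨hhit hVU h1 v hv, hhit hVU h2 v hv, hhit hVU h3 v hv⟩)
    omega
  · have hSX : ({a, b, c, d} : Finset ℕ) ⊆ X := by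
      have h1 := (hU _ (mem_filter.1 h1).1).1
      have h2 := (hU _ (mem_filter.1 h2).1).1
      simp only [insert_subset_iff, singleton_subset_iff] at h1 h2 ⊢
      exact ⟨h1.1, h1.2, h2⟩
    have hcard : ({a, b, c, d} : Finset ℕ).card = S₄.card := by
      obtain ⟨hab, hac, had, hbc, hbd, hcd⟩ := hne
      rw [hS₄4]
      simp [card_insert_of_notMem, *]
    have hdiff : (X \ {a, b, c, d}).card = (X \ S₄).card := by
      rw [card_sdiff_of_subset hSX, card_sdiff_of_subset hS₄, hcard]
    obtain ⟨S, hS, hS2⟩ := exists_subset_card_eq (s := X \ {a, b, c, d}) (n := 2)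
      (by rw [hdiff, ← hS₂2]; exact card_le_card hS₂)
    rw [← card_hitSets_congr k 1 hSX hS₄ rfl hcard,
      ← card_hitSets_congr k 2 hS hS₂ hdiff (hS2.trans hS₂2.symm)]
    exact card_meet_le_of_alternating_cycle hk hX hU hV hUV hne rfl hSX hS hS2
      (fun u hu => ⟨hhit hUV h3 u hu, hhit hUV h4 u hu⟩)
      (fun v hv => ⟨hhit hVU h1 v hv, hhit hVU h2 v hv⟩)

theorem exists_inter_eq {X D A B : Finset ℕ} {k : ℕ} (hDX : D ⊆ X) (hA : A ⊆ X) (hB : B ⊆ X)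
    (hAB : Disjoint A B) (hDA : (D ∪ A).card ≤ k) (hDB : (D ∪ B).card ≤ k) (hD : D.card < k)
    (hX : 2 * k ≤ X.card) :
    ∃ F ⊆ X, ∃ G ⊆ X, F.card = k ∧ G.card = k ∧ A ⊆ F ∧ B ⊆ G ∧ F ≠ G ∧ F ∩ G = D := by
  have hBD : (B \ D).card ≤ k := (card_le_card (sdiff_subset.trans subset_union_right)).trans hDB
  obtain ⟨F, hF1, hF2, hF3⟩ := exists_subsuperset_card_eq (s := D ∪ A) (t := X \ (B \ D))
    (fun w hw => by
      rcases mem_union.1 hw with h | h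
      · simp [hDX h, h]
      · simp [hA h, disjoint_left.1 hAB h]) hDA
    (by
      have := le_card_sdiff (B \ D) X
      omega)
  have hDF : D ⊆ F := subset_union_left.trans hF1
  obtain ⟨G, hG1, hG2, hG3⟩ := exists_subsuperset_card_eq (s := D ∪ B) (t := X \ F ∪ D)
    (fun w hw => by
      by_cases hwD : w ∈ D
      · exact mem_union_right _ hwD
      have hwB := (mem_union.1 hw).resolve_left hwD
      exact mem_union_left _ (mem_sdiff.2 ⟨hB hwB, fun h =>
        (mem_sdiff.1 (hF2 h)).2 (mem_sdiff.2 ⟨hwB, hwD⟩)⟩)) hDB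
    (by
      have := le_card_sdiff F X
      have := card_le_card (subset_union_left (s₁ := X \ F) (s₂ := D))
      omega)
  have hFG : F ∩ G = D := by
    refine Subset.antisymm (fun w hw => ?_)
      (subset_inter hDF (subset_union_left.trans hG1))
    rw [mem_inter] at hw
    exact (mem_union.1 (hG2 hw.2)).resolve_left fun h => (mem_sdiff.1 h).2 hw.1
  refine ⟨F, hF2.trans sdiff_subset, G, hG2.trans (union_subset sdiff_subset hDX), hF3, hG3,
    subset_union_right.trans hF1, subset_union_right.trans hG1, ?_, hFG⟩
  rintro rfl
  rw [← hFG, inter_self] at hD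
  omega

theorem mem_dInt {A B : Finset (Finset ℕ)} {D : Finset ℕ} :
    D ∈ dInt A B ↔ ∃ a ∈ A, ∃ b ∈ B, a ≠ b ∧ a ∩ b = D := by
  simp only [dInt, mem_image, mem_filter, mem_product, Prod.exists]
  constructor
  · rintro ⟨a, b, ⟨⟨ha, hb⟩, hne⟩, h⟩
    exact ⟨a, ha, b, hb, hne, h⟩
  · rintro ⟨a, ha, b, hb, hne, h⟩
    exact ⟨a, b, ⟨⟨ha, hb⟩, hne⟩, h⟩

theorem mem_A1 {n k : ℕ} {F : Finset ℕ} : F ∈ A1 n k ↔ (F ⊆ ground n ∧ F.card = k) ∧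
    (({1, 2} ⊆ F ∨ {3, 4} ⊆ F) ∨ {1, 4, 5} ⊆ F ∨ {2, 3, 6} ⊆ F) := by
  simp only [A1, starF, ksets, mem_union, mem_filter, mem_powersetCard]
  tauto

theorem mem_A2 {n k : ℕ} {F : Finset ℕ} : F ∈ A2 n k ↔ (F ⊆ ground n ∧ F.card = k) ∧
    (({1, 3} ⊆ F ∨ {2, 4} ⊆ F) ∨ {1, 4, 6} ⊆ F ∨ {2, 3, 5} ⊆ F) := by
  simp only [A2, starF, ksets, mem_union, mem_filter, mem_powersetCard]
  tauto

theorem card_hitSets_le_card_dInt {n k : ℕ} (hk : 2 ≤ k) (hn : 100 * k ^ 2 ≤ n) :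
    (hitSets (ground n) k 1 {1, 2, 3, 4}).card +
      (hitSets (ground n \ {1, 2, 3, 4}) k 2 {5, 6}).card ≤ (dInt (A1 n k) (A2 n k)).card := by
  have hn2 : 2 * k ≤ n := by nlinarith
  have hn400 : 400 ≤ n := by nlinarith
  have hcard : (ground n).card = n := by simp [ground]
  have hin : ∀ T : Finset ℕ, T ⊆ {1, 2, 3, 4} → T ⊆ ground n := fun T hT w hw => by
    have := hT hw
    simp only [mem_insert, mem_singleton] at this
    simp only [ground, mem_Icc]
    omega
  have key : ∀ {D A B : Finset ℕ} {s : ℕ}, D ⊆ ground n → D.card + s ≤ k → A ⊆ {1, 2, 3, 4} →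
      B ⊆ {1, 2, 3, 4} → Disjoint A B → A.card ≤ s → B.card ≤ s → 1 ≤ s →
      (∀ F, D ∪ A ⊆ F → ({1, 2} ⊆ F ∨ {3, 4} ⊆ F) ∨ {1, 4, 5} ⊆ F ∨ {2, 3, 6} ⊆ F) →
      (∀ G, D ∪ B ⊆ G → ({1, 3} ⊆ G ∨ {2, 4} ⊆ G) ∨ {1, 4, 6} ⊆ G ∨ {2, 3, 5} ⊆ G) →
      D ∈ dInt (A1 n k) (A2 n k) := by
    intro D A B s hD hDk hA hB hAB hAs hBs hs hFA hGB
    have h1 := card_union_le D A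
    have h2 := card_union_le D B
    obtain ⟨F, hF, G, hG, hFk, hGk, hAF, hBG, hne, hFG⟩ := exists_inter_eq (k := k) hD (hin A hA)
      (hin B hB) hAB (by omega) (by omega) (by omega) (by omega)
    have hDF : D ⊆ F := hFG ▸ inter_subset_left
    have hDG : D ⊆ G := hFG ▸ inter_subset_right
    exact mem_dInt.2 ⟨F, mem_A1.2 ⟨⟨hF, hFk⟩, hFA F (union_subset hDF hAF)⟩,
      G, mem_A2.2 ⟨⟨hG, hGk⟩, hGB G (union_subset hDG hBG)⟩, hne, hFG⟩
  rw [← card_union_of_disjoint]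
  · refine card_le_card fun D hD => ?_
    have hpair : ∀ {x y : ℕ} {F : Finset ℕ}, x ∈ D → D ∪ {y} ⊆ F → x ∈ F ∧ y ∈ F := by
      intro x y F hx h
      exact ⟨h (mem_union_left _ hx), h (by simp)⟩
    have htriple : ∀ {x y z : ℕ} {F : Finset ℕ}, x ∈ D → D ∪ {y, z} ⊆ F →
        x ∈ F ∧ y ∈ F ∧ z ∈ F := by
      intro x y z F hx h
      exact ⟨h (mem_union_left _ hx), h (by simp), h (by simp)⟩
    rcases mem_union.1 hD with hD | hD
    · obtain ⟨⟨hDX, hDk⟩, w, hw⟩ := mem_hitSets.1 hD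
      simp only [mem_inter, mem_insert, mem_singleton] at hw
      obtain ⟨hw, rfl | rfl | rfl | rfl⟩ := hw
      · refine key (A := {2}) (B := {3}) hDX hDk (by decide) (by decide) (by decide) le_rfl le_rfl
          le_rfl (fun F hF => ?_) fun G hG => ?_
        · have := hpair hw hF
          simp [insert_subset_iff, this]
        · have := hpair hw hG
          simp [insert_subset_iff, this]
      · refine key (A := {1}) (B := {4}) hDX hDk (by decide) (by decide) (by decide) le_rfl le_rfl
          le_rfl (fun F hF => ?_) fun G hG => ?_
        · have := hpair hw hF
          simp [insert_subset_iff, this]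
        · have := hpair hw hG
          simp [insert_subset_iff, this]
      · refine key (A := {4}) (B := {1}) hDX hDk (by decide) (by decide) (by decide) le_rfl le_rfl
          le_rfl (fun F hF => ?_) fun G hG => ?_
        · have := hpair hw hF
          simp [insert_subset_iff, this]
        · have := hpair hw hG
          simp [insert_subset_iff, this]
      · refine key (A := {3}) (B := {2}) hDX hDk (by decide) (by decide) (by decide) le_rfl le_rfl
          le_rfl (fun F hF => ?_) fun G hG => ?_
        · have := hpair hw hF
          simp [insert_subset_iff, this]
        · have := hpair hw hG
          simp [insert_subset_iff, this]
    · obtain ⟨⟨hDX, hDk⟩, w, hw⟩ := mem_hitSets.1 hD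
      replace hDX := hDX.trans sdiff_subset
      simp only [mem_inter, mem_insert, mem_singleton] at hw
      obtain ⟨hw, rfl | rfl⟩ := hw
      · refine key (A := {1, 4}) (B := {2, 3}) hDX hDk (by decide) (by decide) (by decide) le_rfl
          le_rfl one_le_two (fun F hF => ?_) fun G hG => ?_
        · have := htriple hw hF
          simp [insert_subset_iff, this]
        · have := htriple hw hG
          simp [insert_subset_iff, this]
      · refine key (A := {2, 3}) (B := {1, 4}) hDX hDk (by decide) (by decide) (by decide) le_rfl
          le_rfl one_le_two (fun F hF => ?_) fun G hG => ?_
        · have := htriple hw hF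
          simp [insert_subset_iff, this]
        · have := htriple hw hG
          simp [insert_subset_iff, this]
  · refine disjoint_left.2 fun D hD hD' => ?_
    obtain ⟨-, w, hw⟩ := mem_hitSets.1 hD
    rw [mem_inter] at hw
    exact (mem_sdiff.1 ((mem_hitSets.1 hD').1.1 hw.1)).2 hw.2

theorem dInt_eq_empty {F G : Finset (Finset ℕ)} (hF : ∀ A ∈ F, A.card ≤ 1)
    (hG : ∀ B ∈ G, B.card ≤ 1) (hcross : crossInt F G) : dInt F G = ∅ := by
  refine eq_empty_of_forall_notMem fun D hD => ?_
  obtain ⟨A, hA, B, hB, hne, -⟩ := mem_dInt.1 hD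
  obtain ⟨w, hw⟩ := hcross A hA B hB
  rw [mem_inter] at hw
  have single : ∀ {C : Finset ℕ}, C.card ≤ 1 → w ∈ C → C = {w} := fun hC hwC =>
    eq_singleton_iff_unique_mem.2 ⟨hwC, fun y hy => card_le_one.1 hC y hy w hwC⟩
  exact hne ((single (hF A hA) hw.1).trans (single (hG B hB) hw.2).symm)

/-- The transversals of `Q` among the subsets of `X` of size at most `k`. -/
noncomputable def hittingSets (X : Finset ℕ) (k : ℕ) (Q : Finset (Finset ℕ)) :
    Finset (Finset ℕ) :=
  open Classical in (lowSets X k 0).filter fun T => Hits T Q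

theorem mem_hittingSets {X T : Finset ℕ} {k : ℕ} {Q : Finset (Finset ℕ)} :
    T ∈ hittingSets X k Q ↔ (T ⊆ X ∧ T.card ≤ k) ∧ Hits T Q := by
  simp [hittingSets, mem_lowSets]

theorem stmt3 (n k : ℕ) (hn : 100 * k ^ 2 ≤ n)
    (F G : Finset (Finset ℕ)) (hF : F ⊆ ksets n k) (hG : G ⊆ ksets n k)
    (hcross : crossInt F G) :
    (dInt F G).card ≤ (dInt (A1 n k) (A2 n k)).card := by
  have hFk : ∀ A ∈ F, A ⊆ ground n ∧ A.card = k := fun A hA => mem_powersetCard.1 (hF hA)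
  have hGk : ∀ B ∈ G, B ⊆ ground n ∧ B.card = k := fun B hB => mem_powersetCard.1 (hG hB)
  rcases Nat.lt_or_ge k 2 with hk | hk
  · rw [dInt_eq_empty (fun A hA => by have := (hFk A hA).2; omega)
      (fun B hB => by have := (hGk B hB).2; omega) hcross]
    simp
  have hcard : (ground n).card = n := by simp [ground]
  have hn400 : 400 ≤ n := by nlinarith
  set U := hittingSets (ground n) k G
  set V := hittingSets (ground n) k U
  have hFU : F ⊆ U := fun A hA =>
    mem_hittingSets.2 ⟨⟨(hFk A hA).1, (hFk A hA).2.le⟩, hcross A hA⟩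
  have hGV : G ⊆ V := fun B hB => mem_hittingSets.2 ⟨⟨(hGk B hB).1, (hGk B hB).2.le⟩,
    fun u hu => by rw [inter_comm]; exact (mem_hittingSets.1 hu).2 B hB⟩
  have hUV : crossInt U V := crossInt_symm fun v hv => (mem_hittingSets.1 hv).2
  have hsub : dInt F G ⊆ (meet U V).filter fun D => D.card + 1 ≤ k := by
    intro D hD
    obtain ⟨A, hA, B, hB, hne, rfl⟩ := mem_dInt.1 hD
    refine mem_filter.2 ⟨mem_meet.2 ⟨A, hFU hA, B, hGV hB, rfl⟩, ?_⟩
    by_contra! h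
    have h1 : A ∩ B = A := eq_of_subset_of_card_le inter_subset_left
      (by rw [(hFk A hA).2]; omega)
    exact hne (eq_of_subset_of_card_le (inter_eq_left.1 h1)
      ((hGk B hB).2.trans (hFk A hA).2.symm).le)
  have h := card_meet_le_of_closed (X := ground n) (S₄ := {1, 2, 3, 4}) (S₂ := {5, 6}) hk
    (hn.trans hcard.ge) (fun u hu => (mem_hittingSets.1 hu).1)
    (fun v hv => (mem_hittingSets.1 hv).1) hUV
    (fun T hT hTk hTV => mem_hittingSets.2 ⟨⟨hT, hTk⟩, fun B hB => hTV B (hGV hB)⟩)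
    (fun T hT hTk hTU => mem_hittingSets.2 ⟨⟨hT, hTk⟩, hTU⟩)
    (by
      intro w hw
      simp only [mem_insert, mem_singleton] at hw
      simp only [ground, mem_Icc]
      omega) rfl
    (by
      intro w hw
      simp only [mem_insert, mem_singleton] at hw
      simp only [ground, mem_sdiff, mem_Icc, mem_insert, mem_singleton]
      omega) rfl
  exact (card_le_card hsub).trans (h.trans (card_hitSets_le_card_dInt hk hn))
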